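/- For integers n ≥ k ≥ d ≥ 1, the set C_{n,k,d} descends to a ℤ[t_1,…,t_k]-module basis of the quotient ℤ[x_1,…,x_n,y_1,…,y_d,t_1,…,t_k]^{S_d}/I_{n,k,d}; in particular, this quotient is a free ℤ[t_1,…,t_k]-module of rank (k!/(k−d)!)·Stir(n,d). -/

import Mathlib

open MvPolynomial

set_option synthInstance.maxHeartbeats 1000000
set_option maxHeartbeats 4000000

/-- Stirling numbers of the second kind: the number of set partitions of an `n`-element
set into `d` nonempty blocks, via the standard recurrence. -/
def stirling2 : ℕ → ℕ → ℕ
  | 0, 0 => 1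
  | 0, _ + 1 => 0
  | _ + 1, 0 => 0
  | n + 1, d + 1 => (d + 1) * stirling2 n (d + 1) + stirling2 n d

/-- The elementary symmetric polynomial `e_r` in the x-variables, inside `ℤ[x,y,t]`. -/
noncomputable def eX3Z (n k d r : ℕ) : MvPolynomial (Fin n ⊕ Fin d ⊕ Fin k) ℤ :=
  rename Sum.inl (esymm (Fin n) ℤ r)

/-- The complete homogeneous symmetric polynomial `h_r` in the y-variables,
inside `ℤ[x,y,t]`. -/
noncomputable def hY3Z (n k d r : ℕ) : MvPolynomial (Fin n ⊕ Fin d ⊕ Fin k) ℤ :=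
  rename (Sum.inr ∘ Sum.inl) (hsymm (Fin d) ℤ r)

/-- The elementary symmetric polynomial `e_r` in the y-variables, inside `ℤ[x,y,t]`. -/
noncomputable def eY3Z (n k d r : ℕ) : MvPolynomial (Fin n ⊕ Fin d ⊕ Fin k) ℤ :=
  rename (Sum.inr ∘ Sum.inl) (esymm (Fin d) ℤ r)

/-- The elementary symmetric polynomial `e_r` in the t-variables, inside `ℤ[x,y,t]`. -/
noncomputable def eT3Z (n k d r : ℕ) : MvPolynomial (Fin n ⊕ Fin d ⊕ Fin k) ℤ :=
  rename (Sum.inr ∘ Sum.inr) (esymm (Fin k) ℤ r)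

/-- `Σ_{a+b=r} (−1)^b e_a(t_1,…,t_k)·h_b(y_1,…,y_d)`, over `ℤ`. -/
noncomputable def genTY3Z (n k d r : ℕ) : MvPolynomial (Fin n ⊕ Fin d ⊕ Fin k) ℤ :=
  ∑ j ∈ Finset.range (r + 1),
    (-1 : MvPolynomial (Fin n ⊕ Fin d ⊕ Fin k) ℤ) ^ j * (eT3Z n k d (r - j) * hY3Z n k d j)

/-- `Σ_{a+b=r} (−1)^b e_a(x_1,…,x_n)·h_b(y_1,…,y_d)`, over `ℤ`. -/
noncomputable def genXY3Z (n k d r : ℕ) : MvPolynomial (Fin n ⊕ Fin d ⊕ Fin k) ℤ :=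
  ∑ j ∈ Finset.range (r + 1),
    (-1 : MvPolynomial (Fin n ⊕ Fin d ⊕ Fin k) ℤ) ^ j * (eX3Z n k d (r - j) * hY3Z n k d j)

/-- `Σ_{j=0}^{d} (−1)^j x_i^{d−j} e_j(y_1,…,y_d)`, over `ℤ`. -/
noncomputable def genPow3Z (n k d : ℕ) (i : Fin n) : MvPolynomial (Fin n ⊕ Fin d ⊕ Fin k) ℤ :=
  ∑ j ∈ Finset.range (d + 1),
    (-1 : MvPolynomial (Fin n ⊕ Fin d ⊕ Fin k) ℤ) ^ j * (X (Sum.inl i) ^ (d - j) * eY3Z n k d j)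

/-- The generating set for the ideal `I_{n,k,d}` inside `ℤ[x,y,t]`. -/
def Jtgens3Z (n k d : ℕ) : Set (MvPolynomial (Fin n ⊕ Fin d ⊕ Fin k) ℤ) :=
  {p | ∃ r, k - d < r ∧ p = genTY3Z n k d r} ∪
  {p | ∃ r, n - d < r ∧ p = genXY3Z n k d r} ∪
  {p | ∃ i : Fin n, p = genPow3Z n k d i}

/-- The permutation of the variable index set `Fin n ⊕ Fin d ⊕ Fin k` induced by a
permutation of the y-indices. -/
def permY3 (n k d : ℕ) (g : Equiv.Perm (Fin d)) :
    (Fin n ⊕ Fin d ⊕ Fin k) ≃ (Fin n ⊕ Fin d ⊕ Fin k) :=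
  Equiv.sumCongr (Equiv.refl (Fin n)) (Equiv.sumCongr g (Equiv.refl (Fin k)))

/-- The subring of `S_d`-invariants of `ℤ[x_1,…,x_n,y_1,…,y_d,t_1,…,t_k]`, where `S_d`
permutes the variables `y_1,…,y_d` and fixes all other variables. -/
noncomputable def invZ3 (n k d : ℕ) :
    Subalgebra ℤ (MvPolynomial (Fin n ⊕ Fin d ⊕ Fin k) ℤ) where
  carrier := {f | ∀ g : Equiv.Perm (Fin d), rename (⇑(permY3 n k d g)) f = f}
  mul_mem' := fun ha hb g => by rw [map_mul, ha g, hb g]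
  add_mem' := fun ha hb g => by rw [map_add, ha g, hb g]
  one_mem' := fun g => by rw [map_one]
  zero_mem' := fun g => by rw [map_zero]
  algebraMap_mem' := fun r g => by rw [MvPolynomial.algebraMap_eq, rename_C]

/-- The map `ℤ[t_1,…,t_k] → ℤ[x,y,t]^{S_d}` sending `t_i` to `t_i`. -/
noncomputable def tHomZ (n k d : ℕ) :
    MvPolynomial (Fin k) ℤ →ₐ[ℤ] ↥(invZ3 n k d) :=
  AlgHom.codRestrict (rename (Sum.inr ∘ Sum.inr)) (invZ3 n k d) (fun f g => by
    show rename (⇑(permY3 n k d g)) (rename (Sum.inr ∘ Sum.inr) f) = _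
    rw [rename_rename]
    congr 1)

/-- `ℤ[x,y,t]^{S_d}` is a `ℤ[t_1,…,t_k]`-algebra via `tHomZ`. -/
noncomputable instance invZ3.algebraT (n k d : ℕ) :
    Algebra (MvPolynomial (Fin k) ℤ) ↥(invZ3 n k d) :=
  (tHomZ n k d).toRingHom.toAlgebra

/-- An `(n,d)`-staircase: a shuffle of the sequence `(0,1,…,d−1)` with `n−d` copies
of `d−1`, i.e. the values `0, 1, …, d−1` appear in this order at some increasing set of
`d` positions and every other entry equals `d−1`. -/
def IsStaircase (n d : ℕ) (s : Fin n → ℕ) : Prop :=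
  ∃ φ : Fin d → Fin n, StrictMono φ ∧ (∀ t, s (φ t) = t) ∧
    ∀ j : Fin n, (∀ t, j ≠ φ t) → s j = d - 1

/-- An `(n,d)`-substaircase sequence: componentwise at most some `(n,d)`-staircase. -/
def IsSubstaircase (n d : ℕ) (a : Fin n → ℕ) : Prop :=
  ∃ s, IsStaircase n d s ∧ ∀ j, a j ≤ s j

/-- Complete homogeneous symmetric polynomial indexed by an integer
(interpreted as zero for a negative index). -/
noncomputable def hsymmZidx (σ : Type*) [Fintype σ] [DecidableEq σ] (R : Type*)
    [CommSemiring R] (m : ℤ) : MvPolynomial σ R :=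
  if 0 ≤ m then hsymm σ R m.toNat else 0

/-- The Schur polynomial `s_λ` in the `d` variables `y_1,…,y_d` over `ℤ`, defined via the
Jacobi–Trudi determinant `det(h_{λ_i − i + j})_{1 ≤ i,j ≤ d}` (for `λ` a partition with at
most `d` parts, recorded as a weakly decreasing function `Fin d → ℕ`). -/
noncomputable def schurPoly (d : ℕ) (lam : Fin d → ℕ) : MvPolynomial (Fin d) ℤ :=
  (Matrix.of fun i j : Fin d =>
    hsymmZidx (Fin d) ℤ ((lam i : ℤ) - ((i : ℕ) : ℤ) + ((j : ℕ) : ℤ))).det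

/-- The set `C_{n,k,d}`, viewed inside `ℤ[x,y,t]`: products of substaircase monomials in
the x-variables with Schur polynomials `s_λ(y_1,…,y_d)` for partitions `λ ⊆ (k−d)^d`. -/
def CsetZ3 (n k d : ℕ) : Set (MvPolynomial (Fin n ⊕ Fin d ⊕ Fin k) ℤ) :=
  {p | ∃ a : Fin n → ℕ, IsSubstaircase n d a ∧
    ∃ lam : Fin d → ℕ, Antitone lam ∧ (∀ i, lam i ≤ k - d) ∧
      p = (∏ j, X (Sum.inl j) ^ a j) * rename (Sum.inr ∘ Sum.inl) (schurPoly d lam)}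


theorem geom_inv {S : Type*} [CommRing S] (a : S) :
    PowerSeries.mk (fun m => a ^ m) * (1 - PowerSeries.C a * PowerSeries.X) = 1 := by
  ext m
  rw [mul_sub, mul_one, ← mul_assoc, mul_comm _ (PowerSeries.C a), mul_assoc, map_sub,
    PowerSeries.coeff_C_mul, PowerSeries.coeff_one]
  cases m with
  | zero => simp
  | succ m => simp [PowerSeries.coeff_succ_mul_X, pow_succ']

theorem hsymm_gf_prod {S : Type*} [CommRing S] {d : ℕ} (y : Fin d → S) :
    PowerSeries.mk (fun m => aeval y (hsymm (Fin d) ℤ m)) =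
      ∏ i, PowerSeries.mk (fun m => y i ^ m) := by
  ext m
  rw [PowerSeries.coeff_prod, PowerSeries.coeff_mk, hsymm, map_sum]
  simp only [PowerSeries.coeff_mk]
  rw [← Finset.sum_coe_sort (Finset.finsuppAntidiag Finset.univ m)]
  symm
  refine Fintype.sum_equiv ((Equiv.subtypeEquivRight (fun f => ?_)).trans
    (Sym.equivNatSum (Fin d) m).symm) _ _ ?_
  · simp [Finset.mem_finsuppAntidiag, Finsupp.sum_fintype]
  · rintro ⟨f, hf⟩
    simp only [Equiv.trans_apply]
    change _ = aeval y ((Multiset.map X (Finsupp.toMultiset f)).prod)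
    rw [Finsupp.toMultiset_map, Finsupp.prod_toMultiset, Finsupp.prod_mapDomain_index (by simp)
      (by simp [pow_add]), Finsupp.prod_fintype _ _ (by simp)]
    simp

theorem hsymm_gf {S : Type*} [CommRing S] {d : ℕ} (y : Fin d → S) :
    PowerSeries.mk (fun m => aeval y (hsymm (Fin d) ℤ m)) *
      ∏ i, (1 - PowerSeries.C (y i) * PowerSeries.X) = 1 := by
  rw [hsymm_gf_prod, ← Finset.prod_mul_distrib]
  exact Finset.prod_eq_one fun i _ => geom_inv _

theorem hsymm_gf_neg {S : Type*} [CommRing S] {d : ℕ} (y : Fin d → S) :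
    PowerSeries.mk (fun m => (-1) ^ m * aeval y (hsymm (Fin d) ℤ m)) *
      ∏ i, (1 + PowerSeries.C (y i) * PowerSeries.X) = 1 := by
  have h := congrArg (PowerSeries.evalNegHom) (hsymm_gf y)
  rw [map_mul, map_prod, map_one] at h
  convert h using 2
  · ext m
    simp [PowerSeries.evalNegHom]
  · refine Finset.prod_congr rfl fun i _ => ?_
    have : (PowerSeries.rescale (-1)) (PowerSeries.C (y i)) = PowerSeries.C (y i) := by
      ext m
      simp only [PowerSeries.coeff_rescale, PowerSeries.coeff_C]
      split_ifs with h
      · simp [h]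
      · simp
    simp [PowerSeries.evalNegHom, this]

theorem esymm_gf {S : Type*} [CommRing S] {k : ℕ} (t : Fin k → S) :
    ∏ i, (1 + PowerSeries.C (t i) * PowerSeries.X) =
      PowerSeries.mk (fun m => aeval t (esymm (Fin k) ℤ m)) := by
  ext m
  rw [Finset.prod_one_add, PowerSeries.coeff_mk, map_sum]
  simp only [Finset.prod_mul_distrib, Finset.prod_const, ← map_prod, PowerSeries.coeff_C_mul,
    PowerSeries.coeff_X_pow, esymm, map_sum]
  rw [Finset.powersetCard_eq_filter, Finset.sum_filter]
  refine Finset.sum_congr rfl fun s _ => ?_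
  by_cases h : s.card = m
  · simp [h]
  · simp [h, Ne.symm h]

theorem esymm_gf_poly {S : Type*} [CommRing S] {k : ℕ} (t : Fin k → S) (m : ℕ) :
    (∏ i, (1 + Polynomial.C (t i) * Polynomial.X)).coeff m = aeval t (esymm (Fin k) ℤ m) := by
  have := congrArg (PowerSeries.coeff m) (esymm_gf t)
  rw [PowerSeries.coeff_mk] at this
  rw [← this, ← Polynomial.coeff_coe]
  congr 1
  rw [← Polynomial.coeToPowerSeries.ringHom_apply, map_prod]
  simp

theorem gen_vanish {S : Type*} [CommRing S] {k d : ℕ} (t : Fin k → S) (ι : Fin d → Fin k)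
    (hι : Function.Injective ι) (r : ℕ) (hr : k - d < r) :
    ∑ j ∈ Finset.range (r + 1), (-1 : S) ^ j *
      (aeval t (esymm (Fin k) ℤ (r - j)) * aeval (t ∘ ι) (hsymm (Fin d) ℤ j)) = 0 := by
  classical
  set P : Polynomial S :=
    ∏ i ∈ (Finset.univ.image ι)ᶜ, (1 + Polynomial.C (t i) * Polynomial.X) with hP
  have h1 : PowerSeries.mk (fun m => (-1) ^ m * aeval (t ∘ ι) (hsymm (Fin d) ℤ m)) *
      PowerSeries.mk (fun m => aeval t (esymm (Fin k) ℤ m)) = (P : PowerSeries S) := by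
    rw [← esymm_gf, ← Finset.prod_mul_prod_compl (Finset.univ.image ι), ← mul_assoc,
      Finset.prod_image (fun a _ b _ h => hι h)]
    have := hsymm_gf_neg (t ∘ ι)
    simp only [Function.comp_apply] at this
    rw [this, one_mul, hP, ← Polynomial.coeToPowerSeries.ringHom_apply, map_prod]
    simp
  have hdeg : P.natDegree ≤ k - d := by
    refine (Polynomial.natDegree_prod_le _ _).trans ?_
    refine (Finset.sum_le_card_nsmul _ _ 1 fun i _ => ?_).trans ?_
    · compute_degree
    · rw [Finset.card_compl, Finset.card_image_of_injective _ hι]; simp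
  have h2 := congrArg (PowerSeries.coeff r) h1
  rw [PowerSeries.coeff_mul, Polynomial.coeff_coe,
    Polynomial.coeff_eq_zero_of_natDegree_lt (hdeg.trans_lt hr),
    Finset.Nat.sum_antidiagonal_eq_sum_range_succ_mk] at h2
  rw [← h2]
  refine Finset.sum_congr rfl fun j _ => ?_
  simp only [PowerSeries.coeff_mk, Function.comp_def]
  ring

/-- powers of `y j` as combinations of complete symmetric polynomials -/
theorem pow_eq_hsymm {S : Type*} [CommRing S] {d : ℕ} (y : Fin d → S) :
    ∃ q : Fin d → Fin d → S, ∀ (a : ℕ) (j : Fin d), y j ^ a =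
      ∑ l : Fin d, aeval y (hsymmZidx (Fin d) ℤ ((a : ℤ) - ((d : ℤ) - 1) + ((l : ℕ) : ℤ))) * q l j := by
  classical
  let P : Fin d → Polynomial S := fun j =>
    ∏ i ∈ Finset.univ.erase j, (1 - Polynomial.C (y i) * Polynomial.X)
  refine ⟨fun l j => (P j).coeff (d - 1 - l), fun a j => ?_⟩
  have hdeg : (P j).natDegree ≤ d - 1 := by
    refine (Polynomial.natDegree_prod_le _ _).trans ?_
    refine (Finset.sum_le_card_nsmul _ _ 1 fun i _ => ?_).trans ?_
    · compute_degree
    · simp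
  have h1 : PowerSeries.mk (fun m => y j ^ m) =
      PowerSeries.mk (fun m => aeval y (hsymm (Fin d) ℤ m)) * (P j : PowerSeries S) := by
    have e1 := hsymm_gf y
    have e2 := geom_inv (y j)
    rw [← Finset.mul_prod_erase _ _ (Finset.mem_univ j)] at e1
    have e3 : (P j : PowerSeries S) =
        ∏ i ∈ Finset.univ.erase j, (1 - PowerSeries.C (y i) * PowerSeries.X) := by
      rw [← Polynomial.coeToPowerSeries.ringHom_apply, map_prod]
      simp
    rw [e3]
    generalize (∏ i ∈ Finset.univ.erase j, (1 - PowerSeries.C (y i) * PowerSeries.X)) = A at *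
    linear_combination (- PowerSeries.mk (fun m => y j ^ m)) * e1 + 
      PowerSeries.mk (fun m => aeval y (hsymm (Fin d) ℤ m)) * A * e2
  have h2 := congrArg (PowerSeries.coeff a) h1
  rw [PowerSeries.coeff_mk, mul_comm, PowerSeries.coeff_mul,
    Finset.Nat.sum_antidiagonal_eq_sum_range_succ_mk] at h2
  simp only [PowerSeries.coeff_mk, Polynomial.coeff_coe] at h2
  have hd : 0 < d := j.pos
  rw [h2]
  let F : ℕ → S := fun b => 
    (P j).coeff b * aeval y (hsymmZidx (Fin d) ℤ ((a : ℤ) - (b : ℤ)))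
  have h3 : ∑ b ∈ Finset.range (a + 1), (P j).coeff b * aeval y (hsymm (Fin d) ℤ (a - b)) =
      ∑ b ∈ Finset.range (a + 1), F b := by
    refine Finset.sum_congr rfl fun b hb => ?_
    have : b ≤ a := by simpa [Nat.lt_succ_iff] using hb
    simp only [F, hsymmZidx]
    rw [if_pos (by omega)]
    congr 4
    omega
  rw [h3, Finset.sum_subset (Finset.range_mono (show a + 1 ≤ a + 1 + d by omega))]
  · rw [← Finset.sum_subset (Finset.range_mono (show d ≤ a + 1 + d by omega)), 
      ← Finset.sum_range_reflect, Finset.sum_range]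
    · refine Finset.sum_congr rfl fun l _ => ?_
      simp only [F]
      rw [mul_comm]
      congr 4
      have := l.2
      omega
    · intro b _ hb
      simp only [F]
      rw [Polynomial.coeff_eq_zero_of_natDegree_lt, zero_mul]
      simp at hb
      omega
  · intro b _ hb
    simp only [F, hsymmZidx]
    rw [if_neg, map_zero, mul_zero]
    simp at hb
    omega

/-- Divisibility of `∏ (z - x_i)` by the monic polynomial with coefficients `± e_j`. -/
theorem dvd_of_rel {Q : Type*} [CommRing Q] {n d : ℕ} (hdn : d ≤ n) (h e : ℕ → Q) 
    (he : PowerSeries.mk h * PowerSeries.mk (fun j => (-1) ^ j * e j) = 1)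
    (hed : ∀ j, d < j → e j = 0) (x : Fin n → Q) 
    (hx : ∀ r, n - d < r → ∑ j ∈ Finset.range (r + 1), (-1 : Q) ^ j *
      (aeval x (esymm (Fin n) ℤ (r - j)) * h j) = 0) :
    (∑ j ∈ Finset.range (d + 1), 
      Polynomial.C ((-1) ^ j * e j) * Polynomial.X ^ (d - j)) ∣
      ∏ i, (Polynomial.X - Polynomial.C (x i)) := by
  set EX : Polynomial Q := ∏ i, (1 - Polynomial.C (x i) * Polynomial.X) with hEX
  set E : Polynomial Q := ∑ j ∈ Finset.range (d + 1), 
    Polynomial.C ((-1) ^ j * e j) * Polynomial.X ^ j with hE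
  have hEcoe : (E : PowerSeries Q) = PowerSeries.mk (fun j => (-1) ^ j * e j) := by
    ext j
    rw [Polynomial.coeff_coe, PowerSeries.coeff_mk, hE, Polynomial.finsetSum_coeff]
    simp only [Polynomial.coeff_C_mul_X_pow]
    by_cases hj : j < d + 1
    · simp [hj]
    · simp [hj, hed j (by omega)]
  have hEXc : ∀ m, EX.coeff m = (-1) ^ m * aeval x (esymm (Fin n) ℤ m) := by
    intro m
    have := esymm_gf_poly (fun i => - x i) m
    have h2 : ∏ i, (1 + Polynomial.C (- x i) * Polynomial.X) = EX := by
      rw [hEX]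
      refine Finset.prod_congr rfl fun i _ => ?_
      rw [map_neg]; ring
    rw [← h2, this]
    simp only [esymm, map_sum, map_prod, aeval_X, Finset.mul_sum]
    refine Finset.sum_congr rfl fun s hs => ?_
    rw [Finset.prod_neg, (Finset.mem_powersetCard.1 hs).2]
  set G : PowerSeries Q := (EX : PowerSeries Q) * PowerSeries.mk h with hG
  have hGc : ∀ r, n - d < r → PowerSeries.coeff r G = 0 := by
    intro r hr
    rw [hG, mul_comm, PowerSeries.coeff_mul, Finset.Nat.sum_antidiagonal_eq_sum_range_succ_mk]
    have := congrArg (fun z => (-1) ^ r * z) (hx r hr)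
    simp only [mul_zero] at this
    rw [← this, Finset.mul_sum]
    refine Finset.sum_congr rfl fun j hj => ?_
    have hj' : j ≤ r := by simpa [Nat.lt_succ_iff] using hj
    rw [Polynomial.coeff_coe, hEXc, PowerSeries.coeff_mk]
    obtain ⟨c, rfl⟩ := Nat.exists_eq_add_of_le hj'
    simp only [Nat.add_sub_cancel_left]
    have : (-1 : Q) ^ j * (-1) ^ j = 1 := by rw [← mul_pow]; simp
    rw [pow_add]
    linear_combination (- (-1) ^ c * h j * aeval x (esymm (Fin n) ℤ c)) * this
  set g : Polynomial Q := PowerSeries.trunc (n - d + 1) G with hg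
  have hgG : (g : PowerSeries Q) = G := by
    ext r
    rw [Polynomial.coeff_coe, hg, PowerSeries.coeff_trunc]
    split_ifs with h
    · rfl
    · rw [hGc r (by omega)]
  have hmul : EX = g * E := by
    apply Polynomial.coe_injective Q
    rw [Polynomial.coe_mul, hgG, hEcoe, hG, mul_assoc, he, mul_one]
  have hgdeg : g.natDegree ≤ n - d := by
    rw [Polynomial.natDegree_le_iff_coeff_eq_zero]
    intro N hN
    rw [hg, PowerSeries.coeff_trunc, if_neg (by omega)]
  have hEdeg : E.natDegree ≤ d := by
    refine Polynomial.natDegree_sum_le_of_forall_le _ _ fun j hj => ?_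
    refine (Polynomial.natDegree_C_mul_X_pow_le _ _).trans ?_
    simpa [Nat.lt_succ_iff] using hj
  have hrefl : ∀ (m : ℕ) (x : Fin m → Q), 
      (∏ i, (1 - Polynomial.C (x i) * Polynomial.X)).natDegree ≤ m ∧
      Polynomial.reflect m (∏ i, (1 - Polynomial.C (x i) * Polynomial.X)) =
      ∏ i, (Polynomial.X - Polynomial.C (x i)) := by
    intro m
    induction m with
    | zero => intro x; simp
    | succ m ih =>
      intro x
      rw [Fin.prod_univ_succ, Fin.prod_univ_succ]
      have h1 : (1 - Polynomial.C (x 0) * Polynomial.X).natDegree ≤ 1 := by compute_degree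
      obtain ⟨h2, h3⟩ := ih (fun i => x i.succ)
      dsimp only at h2 h3
      constructor
      · refine Polynomial.natDegree_mul_le.trans ?_
        omega
      · have h4 := Polynomial.reflect_mul _ _ h1 h2
        rw [add_comm 1 m] at h4
        rw [h4, h3, Polynomial.reflect_sub]
        simp
  have hfin := congrArg (Polynomial.reflect n) hmul
  have h5 := Polynomial.reflect_mul _ _ hgdeg hEdeg
  rw [Nat.sub_add_cancel hdn] at h5
  rw [(hrefl n x).2, h5] at hfin
  have hEr : Polynomial.reflect d E = ∑ j ∈ Finset.range (d + 1), 
      Polynomial.C ((-1) ^ j * e j) * Polynomial.X ^ (d - j) := by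
    ext m
    rw [Polynomial.coeff_reflect, hE, Polynomial.finsetSum_coeff, Polynomial.finsetSum_coeff]
    refine Finset.sum_congr rfl fun j hj => ?_
    have hj' : j ≤ d := by simpa [Nat.lt_succ_iff] using hj
    simp only [Polynomial.coeff_C_mul_X_pow]
    have h6 : Polynomial.revAt d m = j ↔ m = d - j := by
      rw [← Polynomial.revAt_le hj']
      constructor
      · rintro rfl
        simp
      · rintro rfl
        simp
    simp only [h6]
  rw [← hEr]
  exact ⟨_, by rw [mul_comm]; exact hfin⟩

/-- Words accepted by the greedy right-to-left reading with `e` values still to be found. -/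
def GoodWord (d : ℕ) : (n e : ℕ) → (Fin n → ℕ) → Prop
  | 0, e, _ => e = 0
  | n + 1, e, a => a (Fin.last n) < d ∧
      GoodWord d n (if a (Fin.last n) < e then e - 1 else e) (Fin.init a)

theorem GoodWord.pred {d : ℕ} : ∀ {n e : ℕ} {a : Fin n → ℕ}, GoodWord d n e a →
    GoodWord d n (e - 1) a := by
  intro n
  induction n with
  | zero => 
    intro e a h
    simp only [GoodWord] at h ⊢
    omega
  | succ n ih =>
    intro e a h
    simp only [GoodWord] at h ⊢
    refine ⟨h.1, ?_⟩
    have h2 := h.2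
    by_cases h3 : a (Fin.last n) < e
    · rw [if_pos h3] at h2
      by_cases h4 : a (Fin.last n) < e - 1
      · rw [if_pos h4]; exact ih h2
      · rw [if_neg h4]; exact h2
    · rw [if_neg h3] at h2
      rw [if_neg (by omega)]; exact ih h2

theorem goodWord_snoc {d n e : ℕ} (b : Fin n → ℕ) (c : ℕ) :
    GoodWord d (n + 1) e (Fin.snoc b c) ↔ c < d ∧ GoodWord d n (if c < e then e - 1 else e) b := by
  simp [GoodWord, Fin.init_snoc]

theorem aeval_mul_mem_span {L Q : Type*} [CommRing L] [CommRing Q] [Algebra L Q] (x b : Q)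
    (N : ℕ) (r : Polynomial L) (hr : r.degree < N) (S : Set Q)
    (hS : ∀ a < N, x ^ a * b ∈ S) : Polynomial.aeval x r * b ∈ Submodule.span L S := by
  by_cases h : r = 0
  · simp [h]
  rw [Polynomial.aeval_eq_sum_range' ((Polynomial.natDegree_lt_iff_degree_lt h).2 hr),
    Finset.sum_mul]
  refine Submodule.sum_mem _ fun a ha => ?_
  rw [smul_mul_assoc]
  exact Submodule.smul_mem _ _ (Submodule.subset_span (hS a (by simpa using ha)))

universe u v

theorem span_good (d : ℕ) (n : ℕ) : ∀ (e : ℕ) (L : Type u) (Q : Type v) [CommRing L] [CommRing Q]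
    [Algebra L Q] (x : Fin n → Q) (f p : Polynomial L), f.Monic → p.Monic → f.natDegree = e →
    p.natDegree = d → f ∣ p → (∀ i, Polynomial.aeval (x i) p = 0) →
    f.map (algebraMap L Q) ∣ ∏ i, (Polynomial.X - Polynomial.C (x i)) →
    Algebra.adjoin L (Set.range x) = ⊤ → 
    ∀ q : Q, q ∈ Submodule.span L {m | ∃ a, GoodWord d n e a ∧ m = ∏ i, x i ^ a i} := by
  induction n with
  | zero =>
    intro e L Q _ _ _ x f p hf hp hfe hpd hfp hx hdiv hgen q
    rw [Set.range_eq_empty, Algebra.adjoin_empty] at hgen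
    have hq : q ∈ (⊥ : Subalgebra L Q) := by rw [hgen]; trivial
    obtain ⟨c, rfl⟩ := Algebra.mem_bot.1 hq
    cases subsingleton_or_nontrivial Q with
    | inl h => 
      rw [Subsingleton.elim (algebraMap L Q c) 0]
      exact zero_mem _
    | inr h =>
      have h1 : f.map (algebraMap L Q) = 1 := 
        (hf.map _).eq_one_of_isUnit (isUnit_of_dvd_one (by simpa using hdiv))
      have h2 := hf.natDegree_map (algebraMap L Q)
      rw [h1, Polynomial.natDegree_one] at h2
      rw [Algebra.algebraMap_eq_smul_one]
      refine Submodule.smul_mem _ _ (Submodule.subset_span ⟨Fin.elim0, ?_, by simp⟩)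
      simp only [GoodWord]
      omega
  | succ n ih =>
    intro e L Q _ _ _ x f p hf hp hfe hpd hfp hx hdiv hgen q
    cases subsingleton_or_nontrivial Q with
    | inl h => 
      rw [Subsingleton.elim q 0]
      exact zero_mem _
    | inr hQ =>
    have hL : Nontrivial L := (algebraMap L Q).domain_nontrivial
    obtain ⟨g, rfl⟩ := hfp
    have hg : g.Monic := hf.of_mul_monic_left hp
    have hdeg : e + g.natDegree = d := by rw [← hpd, hf.natDegree_mul hg, hfe]
    set z := x (Fin.last n) with hz
    set T := Submodule.span L {m | ∃ a, GoodWord d (n + 1) e a ∧ m = ∏ i, x i ^ a i} with hT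
    have hTmem : ∀ (b : Fin n → ℕ) (c : ℕ), c < d → 
        GoodWord d n (if c < e then e - 1 else e) b → 
        z ^ c * ∏ i, x (Fin.castSucc i) ^ b i ∈ {m | ∃ a, GoodWord d (n + 1) e a ∧ m = ∏ i, x i ^ a i} := by
      intro b c hc hb
      refine ⟨Fin.snoc b c, (goodWord_snoc b c).2 ⟨hc, hb⟩, ?_⟩
      rw [Fin.prod_univ_castSucc]
      simp [hz, mul_comm]
    have hfg : Polynomial.aeval z f * Polynomial.aeval z g = 0 := by
      rw [← map_mul]; exact hx _
    -- first step: modulo `f(z)`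
    have step1 : ∃ q1 ∈ T, ∃ q2, q = q1 + Polynomial.aeval z f * q2 := by
      rcases Nat.eq_zero_or_pos e with he | he
      · have : f = 1 := hf.natDegree_eq_zero.1 (hfe.trans he)
        exact ⟨0, zero_mem _, q, by simp [this]⟩
      let I : Ideal Q := Ideal.span {Polynomial.aeval z f}
      let φ : AdjoinRoot f →+* Q ⧸ I := AdjoinRoot.lift (algebraMap L (Q ⧸ I)) 
        (Ideal.Quotient.mk I z) (by
          rw [← Polynomial.aeval_def, ← Ideal.Quotient.mkₐ_eq_mk L, Polynomial.aeval_algHom_apply]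
          rw [Ideal.Quotient.mkₐ_eq_mk]
          exact Ideal.Quotient.eq_zero_iff_mem.2 (Ideal.mem_span_singleton_self _))
      let _ : Algebra (AdjoinRoot f) (Q ⧸ I) := φ.toAlgebra
      have hφ : algebraMap (AdjoinRoot f) (Q ⧸ I) = φ := rfl
      have hφof : φ.comp (AdjoinRoot.of f) = algebraMap L (Q ⧸ I) := by
        ext c; simp [φ]
      have hnt : Nontrivial (AdjoinRoot f) := by
        refine Ideal.Quotient.nontrivial_iff.2 fun h => ?_
        have h1 := hf.eq_one_of_isUnit (Ideal.span_singleton_eq_top.1 h)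
        rw [h1, Polynomial.natDegree_one] at hfe
        omega
      set f0 := f.map (AdjoinRoot.of f) with hf0
      set r := AdjoinRoot.root f
      obtain ⟨f', hf'⟩ : (Polynomial.X - Polynomial.C r) ∣ f0 := by
        rw [Polynomial.dvd_iff_isRoot]
        exact AdjoinRoot.isRoot_root f
      have hf0m : f0.Monic := hf.map _
      have hf'm : f'.Monic := (Polynomial.monic_X_sub_C r).of_mul_monic_left (hf' ▸ hf0m)
      have hf'd : f'.natDegree = e - 1 := by
        have h1 : f0.natDegree = e := by rw [hf0, hf.natDegree_map, hfe]
        rw [hf', (Polynomial.monic_X_sub_C r).natDegree_mul hf'm, Polynomial.natDegree_X_sub_C] at h1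
        omega
      have key := ih (e - 1) (AdjoinRoot f) (Q ⧸ I) 
        (fun i => Ideal.Quotient.mk I (x (Fin.castSucc i))) f' ((f * g).map (AdjoinRoot.of f))
        hf'm (hp.map _) hf'd (by rw [hp.natDegree_map, hpd])
        (by rw [Polynomial.map_mul, ← hf0, hf']; exact Dvd.intro_left ((Polynomial.X - Polynomial.C r) * g.map (AdjoinRoot.of f)) (by ring))
        ?_ ?_ ?_ (Ideal.Quotient.mk I q)
      · have lift : ∀ q' ∈ Submodule.span (AdjoinRoot f) {m | ∃ a, GoodWord d n (e - 1) a ∧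
            m = ∏ i, (Ideal.Quotient.mk I (x (Fin.castSucc i))) ^ a i}, 
            ∃ q1 ∈ T, Ideal.Quotient.mk I q1 = q' := by
          intro q' hq'
          induction hq' using Submodule.closure_induction with
          | zero => exact ⟨0, zero_mem _, map_zero _⟩
          | add a b _ _ ha hb =>
            obtain ⟨a1, ha1, rfl⟩ := ha
            obtain ⟨b1, hb1, rfl⟩ := hb
            exact ⟨a1 + b1, add_mem ha1 hb1, map_add _ _ _⟩
          | smul_mem c m hm =>
            obtain ⟨a, ha, rfl⟩ := hm
            obtain ⟨c, rfl⟩ := AdjoinRoot.mk_surjective c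
            refine ⟨Polynomial.aeval z (c %ₘ f) * ∏ i, x (Fin.castSucc i) ^ a i, ?_, ?_⟩
            · refine aeval_mul_mem_span z _ e _ ?_ _ fun c hc => hTmem a c (by omega) (by rwa [if_pos hc])
              rw [← hfe, ← Polynomial.degree_eq_natDegree hf.ne_zero]
              exact Polynomial.degree_modByMonic_lt _ hf
            · rw [Algebra.smul_def, hφ, map_mul, map_prod]
              simp only [map_pow]
              congr 1
              have h1 : AdjoinRoot.mk f c = AdjoinRoot.mk f (c %ₘ f) := by
                rw [AdjoinRoot.mk_eq_mk]
                exact ⟨c /ₘ f, by linear_combination - Polynomial.modByMonic_add_div c f⟩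
              rw [h1]
              simp only [φ, AdjoinRoot.lift_mk]
              rw [← Polynomial.aeval_def, ← Ideal.Quotient.mkₐ_eq_mk L, 
                Polynomial.aeval_algHom_apply]
        obtain ⟨q1, hq1, h1⟩ := lift _ key
        refine ⟨q1, hq1, ?_⟩
        have h2 : q - q1 ∈ I := Ideal.Quotient.eq.1 h1.symm
        obtain ⟨q2, h3⟩ := Ideal.mem_span_singleton.1 h2
        exact ⟨q2, by rw [← h3]; ring⟩
      · intro i
        rw [Polynomial.aeval_def, Polynomial.eval₂_map, hφ, hφof, ← Polynomial.aeval_def, 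
          ← Ideal.Quotient.mkₐ_eq_mk L, Polynomial.aeval_algHom_apply, hx, map_zero]
      · rw [hφ]
        have h1 := Polynomial.map_dvd (Ideal.Quotient.mk I) hdiv
        rw [Polynomial.map_map, Fin.prod_univ_castSucc, Polynomial.map_mul, Polynomial.map_prod] at h1
        have h2 : f.map ((Ideal.Quotient.mk I).comp (algebraMap L Q)) = 
            (Polynomial.X - Polynomial.C (Ideal.Quotient.mk I z)) * f'.map φ := by
          have h3 : (Ideal.Quotient.mk I).comp (algebraMap L Q) = φ.comp (AdjoinRoot.of f) := by
            rw [hφof]; rfl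
          rw [h3, ← Polynomial.map_map, ← hf0, hf', Polynomial.map_mul]
          simp [φ, r]
        rw [h2, mul_comm (Finset.prod _ _)] at h1
        simp only [Polynomial.map_sub, Polynomial.map_X, Polynomial.map_C] at h1
        obtain ⟨w, hw⟩ := h1
        rw [mul_assoc] at hw
        exact ⟨w, (Polynomial.monic_X_sub_C _).isRegular.left hw⟩
      · rw [eq_top_iff]
        rintro q' -
        obtain ⟨q', rfl⟩ := Ideal.Quotient.mk_surjective q'
        have hq' : q' ∈ Algebra.adjoin L (Set.range x) := by rw [hgen]; trivial
        induction hq' using Algebra.adjoin_induction with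
        | mem y hy =>
          obtain ⟨i, rfl⟩ := hy
          induction i using Fin.lastCases with
          | last => 
            have : Ideal.Quotient.mk I (x (Fin.last n)) = algebraMap (AdjoinRoot f) _ r := by
              simp [hφ, φ, r, hz]
            rw [this]
            exact Subalgebra.algebraMap_mem _ _
          | cast i => exact Algebra.subset_adjoin ⟨i, rfl⟩
        | algebraMap c =>
          have : Ideal.Quotient.mk I (algebraMap L Q c) = algebraMap (AdjoinRoot f) _ (AdjoinRoot.of f c) := by
            rw [hφ, ← RingHom.comp_apply φ, hφof]; rfl
          rw [this]
          exact Subalgebra.algebraMap_mem _ _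
        | add a b _ _ ha hb => rw [map_add]; exact add_mem ha hb
        | mul a b _ _ ha hb => rw [map_mul]; exact mul_mem ha hb
    obtain ⟨q1, hq1, q2, rfl⟩ := step1
    refine add_mem hq1 ?_
    -- second step: the annihilator of `f(z)`
    clear hq1 q1
    let J : Ideal Q := Submodule.annihilator (Ideal.span {Polynomial.aeval z f})
    have hJ : ∀ c, c ∈ J ↔ c * Polynomial.aeval z f = 0 := fun c => 
      Submodule.mem_annihilator_span_singleton _ _
    let φ : Polynomial L →+* Q ⧸ J := 
      (Ideal.Quotient.mk J).comp (Polynomial.aeval z : Polynomial L →ₐ[L] Q).toRingHom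
    let _ : Algebra (Polynomial L) (Q ⧸ J) := φ.toAlgebra
    have hφ : algebraMap (Polynomial L) (Q ⧸ J) = φ := rfl
    have hφof : φ.comp Polynomial.C = algebraMap L (Q ⧸ J) := by
      ext c; simp [φ]
    have key := ih e (Polynomial L) (Q ⧸ J) 
      (fun i => Ideal.Quotient.mk J (x (Fin.castSucc i))) (f.map Polynomial.C)
      ((f * g).map Polynomial.C)
      (hf.map _) (hp.map _) (by rw [hf.natDegree_map, hfe]) (by rw [hp.natDegree_map, hpd])
      (by rw [Polynomial.map_mul]; exact Dvd.intro _ rfl)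
      ?_ ?_ ?_ (Ideal.Quotient.mk J q2)
    · have lift : ∀ q' ∈ Submodule.span (Polynomial L) {m | ∃ a, GoodWord d n e a ∧
          m = ∏ i, (Ideal.Quotient.mk J (x (Fin.castSucc i))) ^ a i}, 
          ∃ q1, Polynomial.aeval z f * q1 ∈ T ∧ Ideal.Quotient.mk J q1 = q' := by
        intro q' hq'
        induction hq' using Submodule.closure_induction with
        | zero => exact ⟨0, by simp, map_zero _⟩
        | add a b _ _ ha hb =>
          obtain ⟨a1, ha1, rfl⟩ := ha
          obtain ⟨b1, hb1, rfl⟩ := hb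
          exact ⟨a1 + b1, by rw [mul_add]; exact add_mem ha1 hb1, map_add _ _ _⟩
        | smul_mem c m hm =>
          obtain ⟨a, ha, rfl⟩ := hm
          refine ⟨Polynomial.aeval z c * ∏ i, x (Fin.castSucc i) ^ a i, ?_, ?_⟩
          · have h1 : Polynomial.aeval z f * Polynomial.aeval z c = 
                Polynomial.aeval z (f * (c %ₘ g)) := by
              rw [map_mul]
              conv_lhs => rw [← Polynomial.modByMonic_add_div c g, map_add, map_mul]
              linear_combination (Polynomial.aeval z (c /ₘ g)) * hfg
            rw [← mul_assoc, h1]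
            refine aeval_mul_mem_span z _ d _ ?_ _ fun c hc => hTmem a c hc ?_
            · have h2 := Polynomial.degree_modByMonic_lt c hg
              rw [mul_comm, hf.degree_mul, ← hdeg, Nat.cast_add, add_comm, 
                ← hfe, ← Polynomial.degree_eq_natDegree hf.ne_zero,
                ← Polynomial.degree_eq_natDegree hg.ne_zero]
              refine WithBot.add_lt_add_left ?_ h2
              rw [Polynomial.degree_eq_natDegree hf.ne_zero]
              exact WithBot.coe_ne_bot
            · split_ifs
              · exact ha.pred
              · exact ha
          · rw [Algebra.smul_def, hφ, map_mul, map_prod]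
            simp only [map_pow]
            rfl
      obtain ⟨q1, hq1, h1⟩ := lift _ key
      have h2 : q2 - q1 ∈ J := Ideal.Quotient.eq.1 h1.symm
      have h3 : Polynomial.aeval z f * q2 = Polynomial.aeval z f * q1 := by
        linear_combination (hJ _).1 h2
      rw [h3]
      exact hq1
    · intro i
      rw [Polynomial.aeval_def, Polynomial.eval₂_map, hφ, hφof, ← Polynomial.aeval_def, 
        ← Ideal.Quotient.mkₐ_eq_mk L, Polynomial.aeval_algHom_apply, hx, map_zero]
    · rw [hφ, Polynomial.map_map, hφof]
      set fQ := f.map (algebraMap L Q) with hfQ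
      have hfQm : fQ.Monic := hf.map _
      set h : Polynomial Q := ∏ i : Fin n, (Polynomial.X - Polynomial.C (x (Fin.castSucc i))) with hh
      rw [Fin.prod_univ_castSucc] at hdiv
      have hev : fQ.eval z = Polynomial.aeval z f := by
        rw [hfQ, Polynomial.eval_map_algebraMap]
      have h1 : fQ ∣ Polynomial.aeval z f • h := by
        obtain ⟨w, hw⟩ := Polynomial.X_sub_C_dvd_sub_C_eval (a := z) (p := fQ)
        obtain ⟨w2, hw2⟩ := hdiv
        rw [hev] at hw
        refine ⟨h - w * w2, ?_⟩
        rw [Polynomial.smul_eq_C_mul]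
        rw [← hh, ← hz] at hw2
        linear_combination (-h) * hw - w * hw2
      rw [← Polynomial.modByMonic_eq_zero_iff_dvd hfQm, Polynomial.smul_modByMonic] at h1
      have h2 : (h %ₘ fQ).map (Ideal.Quotient.mk J) = 0 := by
        ext c
        rw [Polynomial.coeff_map, Polynomial.coeff_zero, Ideal.Quotient.eq_zero_iff_mem, hJ]
        have := congrArg (fun w => Polynomial.coeff w c) h1
        simpa [mul_comm] using this
      rw [Polynomial.map_modByMonic _ hfQm, Polynomial.modByMonic_eq_zero_iff_dvd (hfQm.map _)] at h2
      rw [hfQ, Polynomial.map_map, hh, Polynomial.map_prod] at h2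
      simp only [Polynomial.map_sub, Polynomial.map_X, Polynomial.map_C] at h2
      exact h2
    · rw [eq_top_iff]
      rintro q' -
      obtain ⟨q', rfl⟩ := Ideal.Quotient.mk_surjective q'
      have hq' : q' ∈ Algebra.adjoin L (Set.range x) := by rw [hgen]; trivial
      induction hq' using Algebra.adjoin_induction with
      | mem y hy =>
        obtain ⟨i, rfl⟩ := hy
        induction i using Fin.lastCases with
        | last => 
          have : Ideal.Quotient.mk J (x (Fin.last n)) = algebraMap (Polynomial L) _ Polynomial.X := by
            simp [hφ, φ, hz]
          rw [this]
          exact Subalgebra.algebraMap_mem _ _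
        | cast i => exact Algebra.subset_adjoin ⟨i, rfl⟩
      | algebraMap c =>
        have : Ideal.Quotient.mk J (algebraMap L Q c) = 
            algebraMap (Polynomial L) _ (Polynomial.C c) := by
          rw [hφ, ← RingHom.comp_apply φ, hφof]; rfl
        rw [this]
        exact Subalgebra.algebraMap_mem _ _
      | add a b _ _ ha hb => rw [map_add]; exact add_mem ha hb
      | mul a b _ _ ha hb => rw [map_mul]; exact mul_mem ha hb

theorem goodWord_iff (d : ℕ) : ∀ (n e : ℕ) (a : Fin n → ℕ), e ≤ d → (GoodWord d n e a ↔
    (∀ j, a j < d) ∧ ∃ φ : Fin e → Fin n, StrictMono φ ∧ ∀ t, a (φ t) ≤ t) := by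
  intro n
  induction n with
  | zero =>
    intro e a he
    simp only [GoodWord]
    constructor
    · rintro rfl
      exact ⟨fun j => j.elim0, fun j => j.elim0, fun j => j.elim0, fun j => j.elim0⟩
    · rintro ⟨-, φ, -⟩
      by_contra h
      exact (φ ⟨0, by omega⟩).elim0
  | succ n ih =>
    intro e a he
    simp only [GoodWord]
    by_cases h : a (Fin.last n) < e
    · rw [if_pos h]
      obtain ⟨e, rfl⟩ : ∃ e', e = e' + 1 := ⟨e - 1, by omega⟩
      rw [Nat.add_sub_cancel, ih e _ (by omega)]
      constructor
      · rintro ⟨h1, h2, φ, h3, h4⟩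
        refine ⟨fun j => ?_, Fin.snoc (fun t => (φ t).castSucc) (Fin.last n), ?_, ?_⟩
        · induction j using Fin.lastCases with
          | last => exact h1
          | cast j => exact h2 j
        · intro s t hst
          induction t using Fin.lastCases with
          | last => 
            induction s using Fin.lastCases with
            | last => exact absurd hst (lt_irrefl _)
            | cast s => simp [Fin.castSucc_lt_last]
          | cast t =>
            induction s using Fin.lastCases with
            | last => exact absurd hst (not_lt.2 (Fin.le_last _))
            | cast s => 
              simp only [Fin.snoc_castSucc, Fin.castSucc_lt_castSucc_iff]
              exact h3 (by simpa using hst)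
        · intro t
          induction t using Fin.lastCases with
          | last => simp; omega
          | cast t => simpa [Fin.init] using h4 t
      · rintro ⟨h1, φ, h3, h4⟩
        have hne : ∀ t : Fin e, φ t.castSucc ≠ Fin.last n := fun t =>
          ((h3 (Fin.castSucc_lt_last t)).trans_le (Fin.le_last _)).ne
        refine ⟨h1 _, fun j => h1 _, fun t => (φ t.castSucc).castPred (hne t), ?_, ?_⟩
        · intro s t hst
          rw [Fin.castPred_lt_castPred_iff]
          exact h3 (by simpa using hst)
        · intro t
          simpa [Fin.init] using h4 t.castSucc
    · rw [if_neg h, ih e _ he]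
      constructor
      · rintro ⟨h1, h2, φ, h3, h4⟩
        refine ⟨fun j => ?_, fun t => (φ t).castSucc, ?_, ?_⟩
        · induction j using Fin.lastCases with
          | last => exact h1
          | cast j => exact h2 j
        · intro s t hst
          simpa using h3 hst
        · exact h4
      · rintro ⟨h1, φ, h3, h4⟩
        have hne : ∀ t : Fin e, φ t ≠ Fin.last n := fun t ht => by
          have := h4 t
          rw [ht] at this
          have := t.2
          omega
        refine ⟨h1 _, fun j => h1 _, fun t => (φ t).castPred (hne t), ?_, ?_⟩
        · intro s t hst
          rw [Fin.castPred_lt_castPred_iff]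
          exact h3 hst
        · intro t
          simpa [Fin.init] using h4 t

theorem isSubstaircase_iff (n d : ℕ) (hd : 1 ≤ d) (a : Fin n → ℕ) :
    IsSubstaircase n d a ↔ GoodWord d n d a := by
  classical
  rw [goodWord_iff d n d a le_rfl]
  constructor
  · rintro ⟨s, ⟨φ, h1, h2, h3⟩, h4⟩
    refine ⟨fun j => ?_, φ, h1, fun t => (h4 _).trans (h2 t).le⟩
    refine (h4 j).trans_lt ?_
    by_cases hj : ∀ t, j ≠ φ t
    · rw [h3 j hj]; omega
    · push Not at hj
      obtain ⟨t, rfl⟩ := hj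
      rw [h2]; exact t.2
  · rintro ⟨h1, φ, h2, h3⟩
    refine ⟨fun j => if h : ∃ t, j = φ t then (h.choose : ℕ) else d - 1, 
      ⟨φ, h2, fun t => ?_, fun j hj => ?_⟩, fun j => ?_⟩
    · have h : ∃ t', φ t = φ t' := ⟨t, rfl⟩
      dsimp only
      rw [dif_pos h]
      rw [← h2.injective h.choose_spec]
    · dsimp only
      rw [dif_neg (by push Not; exact hj)]
    · dsimp only
      split_ifs with h
      · have := h.choose_spec
        conv_lhs => rw [this]
        exact h3 _
      · have := h1 j
        omega

/-- Number of functions `[n] → [d]` whose image contains a given `e`-element set. -/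
def coverCount (d : ℕ) : ℕ → ℕ → ℕ
  | 0, e => if e = 0 then 1 else 0
  | n + 1, e => e * coverCount d n (e - 1) + (d - e) * coverCount d n e

theorem card_snoc_filter {d n : ℕ} (P : (Fin (n + 1) → Fin d) → Prop) [DecidablePred P] :
    (Finset.univ.filter P).card = ∑ c : Fin d, (Finset.univ.filter fun a : Fin n → Fin d =>
      P (Fin.snoc a c)).card := by
  classical
  simp only [Finset.card_filter]
  rw [← Fintype.sum_prod_type' (f := fun c (a : Fin n → Fin d) => if P (Fin.snoc a c) then 1 else 0)]
  refine (Fintype.sum_equiv (Fin.snocEquiv (fun _ : Fin (n + 1) => Fin d)) _ _ fun x => ?_).symm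
  rfl

open Classical in
theorem card_goodWord (d n : ℕ) : ∀ e ≤ d, (Finset.univ.filter fun a : Fin n → Fin d =>
    GoodWord d n e (fun i => a i)).card = coverCount d n e := by
  induction n with
  | zero =>
    intro e he
    simp only [GoodWord, coverCount]
    split_ifs with h <;> simp [h]
  | succ n ih =>
    intro e he
    rw [card_snoc_filter]
    have : ∀ c : Fin d, (Finset.univ.filter fun a : Fin n → Fin d =>
        GoodWord d (n + 1) e (fun i => ((Fin.snoc a c : Fin (n + 1) → Fin d) i : ℕ))).card = 
        if (c : ℕ) < e then coverCount d n (e - 1) else coverCount d n e := by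
      intro c
      have h1 : ∀ a : Fin n → Fin d, 
          (fun i => ((Fin.snoc a c : Fin (n + 1) → Fin d) i : ℕ)) = 
          (Fin.snoc (fun i => (a i : ℕ)) (c : ℕ) : Fin (n + 1) → ℕ) := by
        intro a
        ext i
        induction i using Fin.lastCases <;> simp
      simp only [h1, goodWord_snoc, c.2, true_and]
      split_ifs with h
      · exact ih _ (by omega)
      · exact ih _ he
    rw [Finset.sum_congr rfl fun c _ => this c, Finset.sum_ite]
    simp only [Finset.sum_const, smul_eq_mul, coverCount]
    have h2 : (Finset.univ.filter fun c : Fin d => (c : ℕ) < e).card = e := by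
      rw [Fin.card_filter_val_lt]; omega
    have h3 : (Finset.univ.filter fun c : Fin d => ¬ (c : ℕ) < e).card = d - e := by
      have := Finset.card_filter_add_card_filter_not (s := (Finset.univ : Finset (Fin d))) (fun c : Fin d => (c : ℕ) < e)
      rw [h2] at this
      simp only [Finset.card_univ, Fintype.card_fin] at this
      omega
    rw [h2, h3]

open Classical in
theorem card_cover (d n : ℕ) : ∀ U : Finset (Fin d), (Finset.univ.filter fun a : Fin n → Fin d =>
    ∀ u ∈ U, ∃ i, a i = u).card = coverCount d n U.card := by
  induction n with
  | zero =>
    intro U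
    simp only [coverCount]
    split_ifs with h
    · simp [Finset.card_eq_zero.1 h]
    · rw [Finset.card_eq_zero, Finset.filter_eq_empty_iff]
      intro a _ h2
      obtain ⟨u, hu⟩ := Finset.card_ne_zero.1 h
      obtain ⟨i, -⟩ := h2 u hu
      exact i.elim0
  | succ n ih =>
    intro U
    rw [card_snoc_filter]
    have : ∀ c : Fin d, (Finset.univ.filter fun a : Fin n → Fin d =>
        ∀ u ∈ U, ∃ i, (Fin.snoc a c : Fin (n + 1) → Fin d) i = u).card = 
        if c ∈ U then coverCount d n (U.card - 1) else coverCount d n U.card := by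
      intro c
      have h1 : ∀ a : Fin n → Fin d, (∀ u ∈ U, ∃ i, (Fin.snoc a c : Fin (n + 1) → Fin d) i = u) ↔ 
          ∀ u ∈ U.erase c, ∃ i, a i = u := by
        intro a
        refine ⟨fun h u hu => ?_, fun h u hu => ?_⟩
        · obtain ⟨i, hi⟩ := h u (Finset.mem_of_mem_erase hu)
          induction i using Fin.lastCases with
          | last => 
            rw [Fin.snoc_last] at hi
            exact absurd hi.symm (Finset.ne_of_mem_erase hu)
          | cast i => exact ⟨i, by simpa using hi⟩
        · by_cases huc : u = c
          · exact ⟨Fin.last n, by simp [huc]⟩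
          · obtain ⟨i, hi⟩ := h u (Finset.mem_erase.2 ⟨huc, hu⟩)
            exact ⟨i.castSucc, by simpa using hi⟩
      simp only [h1]
      rw [ih]
      split_ifs with h
      · rw [Finset.card_erase_of_mem h]
      · rw [Finset.erase_eq_of_notMem h]
    rw [Finset.sum_congr rfl fun c _ => this c, Finset.sum_ite]
    simp only [Finset.sum_const, smul_eq_mul, coverCount]
    have h2 : (Finset.univ.filter fun c : Fin d => c ∈ U) = U := by ext; simp
    have h3 : (Finset.univ.filter fun c : Fin d => ¬ c ∈ U).card = d - U.card := by
      have := Finset.card_filter_add_card_filter_not (s := (Finset.univ : Finset (Fin d))) (fun c : Fin d => c ∈ U)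
      rw [h2] at this
      simp only [Finset.card_univ, Fintype.card_fin] at this
      omega
    rw [h2, h3]

theorem coverCount_rec (d n : ℕ) : ∀ e ≤ d, coverCount (d + 1) n e = 
    coverCount (d + 1) n (e + 1) + coverCount d n e := by
  induction n with
  | zero => intro e he; simp [coverCount]
  | succ n ih =>
    intro e he
    simp only [coverCount, Nat.add_sub_cancel]
    have h2 := ih e he
    obtain ⟨c, rfl⟩ := Nat.exists_eq_add_of_le he
    have e1 : e + c + 1 - e = c + 1 := by omega
    have e2 : e + c + 1 - (e + 1) = c := by omega
    have e3 : e + c - e = c := by omega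
    rw [e1, e2, e3]
    rcases Nat.eq_zero_or_pos e with h | h
    · subst h
      simp only [Nat.zero_add, zero_mul] at h2 ⊢
      linear_combination c * h2
    · have h1 := ih (e - 1) (by omega)
      rw [Nat.sub_add_cancel h] at h1
      linear_combination c * h2 + e * h1

theorem coverCount_stirling (n : ℕ) : ∀ d, coverCount d n d = d.factorial * stirling2 n d := by
  induction n with
  | zero => intro d; cases d <;> simp [coverCount, stirling2]
  | succ n ih =>
    intro d
    cases d with
    | zero => simp [coverCount, stirling2]
    | succ d =>
      simp only [coverCount, stirling2, Nat.add_sub_cancel, Nat.sub_self, zero_mul, add_zero]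
      rw [coverCount_rec d n d le_rfl, ih, ih, Nat.factorial_succ]
      ring

theorem strictMono_fin_add {d k : ℕ} (u : Fin d → Fin k) (hu : StrictMono u) :
    ∀ (c i : ℕ) (h : i + c < d), (u ⟨i, by omega⟩ : ℕ) + c ≤ u ⟨i + c, h⟩ := by
  intro c
  induction c with
  | zero => intro i h; simp
  | succ c ih =>
    intro i h
    have h1 := ih i (by omega)
    have h2 : (u ⟨i + c, by omega⟩ : ℕ) < u ⟨i + (c + 1), h⟩ := hu (by simp [Fin.lt_def])
    omega

theorem strictMono_fin_le {d k : ℕ} (u : Fin d → Fin k) (hu : StrictMono u) {i j : Fin d} 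
    (hij : i ≤ j) : (u i : ℕ) + (j - i) ≤ u j := by
  have := strictMono_fin_add u hu (j - i) i (by have := j.2; rw [Fin.le_def] at hij; omega)
  have h : (⟨i + (j - i : ℕ), by have := j.2; rw [Fin.le_def] at hij; omega⟩ : Fin d) = j := by
    ext; simp only; rw [Fin.le_def] at hij; omega
  rwa [h] at this

/-- The partition attached to a `d`-subset of `[k]`. -/
def lamOf {d k : ℕ} (u : Fin d → Fin k) : Fin d → ℕ := fun i => u i.rev - i.rev

theorem lamOf_spec {d k : ℕ} (hk : d ≤ k) (u : Fin d → Fin k) (hu : StrictMono u) : 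
    Antitone (lamOf u) ∧ (∀ i, lamOf u i ≤ k - d) ∧ 
    ∀ i, (lamOf u i : ℤ) = (u i.rev : ℤ) - i.rev := by
  have h0 : ∀ i : Fin d, (i : ℕ) ≤ u i := fun i => by
    have := strictMono_fin_le u hu (i := ⟨0, i.pos⟩) (j := i) (Nat.zero_le _)
    simp only at this
    omega
  refine ⟨fun i j hij => ?_, fun i => ?_, fun i => ?_⟩
  · have := strictMono_fin_le u hu (Fin.rev_le_rev.2 hij)
    have := h0 i.rev
    have := h0 j.rev
    simp only [lamOf]
    have h3 : (j.rev : ℕ) ≤ i.rev := Fin.rev_le_rev.2 hij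
    omega
  · have := strictMono_fin_le u hu (i := i.rev) (j := ⟨d - 1, by have := i.2; omega⟩) 
      (by rw [Fin.le_def]; have := i.rev.2; simp only; omega)
    have h2 := (u ⟨d - 1, by have := i.2; omega⟩).2
    simp only [lamOf]
    simp only at this
    have := h0 i.rev
    have := i.rev.2
    omega
  · have := h0 i.rev
    simp only [lamOf]
    omega

theorem exists_lamOf {d k : ℕ} (hk : d ≤ k) (lam : Fin d → ℕ) (h1 : Antitone lam)
    (h2 : ∀ i, lam i ≤ k - d) : ∃ u : Fin d ↪o Fin k, lamOf u = lam := by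
  have hs : StrictMono (fun i : Fin d => (⟨lam i.rev + i, by 
      have := h2 i.rev; have := i.2; omega⟩ : Fin k)) := by
    intro i j hij
    have := h1 (Fin.rev_le_rev.2 hij.le)
    rw [Fin.lt_def] at hij ⊢
    simp only
    omega
  refine ⟨OrderEmbedding.ofStrictMono _ hs, ?_⟩
  ext i
  simp [lamOf]

theorem jt_span {R Q : Type*} [CommRing R] [CommRing Q] [Algebra R Q] {k d : ℕ} (hk : d ≤ k)
    (h : ℤ → Q) (hneg : ∀ m < 0, h m = 0) (c : ℕ → R)
    (hrel : ∀ m : ℤ, (k : ℤ) - d < m → ∀ M : ℕ, m ≤ M → 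
      h m = ∑ a ∈ Finset.range M, c a • h (m - a - 1)) (m : Fin d → ℤ) :
    (Matrix.of fun i j : Fin d => h (m i + ((j : ℕ) : ℤ))).det ∈ Submodule.span R
      {q | ∃ lam : Fin d → ℕ, Antitone lam ∧ (∀ i, lam i ≤ k - d) ∧ 
        q = (Matrix.of fun i j : Fin d => h ((lam i : ℤ) - ((i : ℕ) : ℤ) + ((j : ℕ) : ℤ))).det} := by
  classical
  set T := Submodule.span R
      {q | ∃ lam : Fin d → ℕ, Antitone lam ∧ (∀ i, lam i ≤ k - d) ∧ 
        q = (Matrix.of fun i j : Fin d => h ((lam i : ℤ) - ((i : ℕ) : ℤ) + ((j : ℕ) : ℤ))).det}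
  let row : ℤ → (Fin d → Q) := fun m j => h (m + ((j : ℕ) : ℤ))
  let v : Fin k → (Fin d → Q) := fun s => row ((s : ℤ) - ((d : ℤ) - 1))
  have hrow : ∀ (B : ℕ) (m : ℤ), m < B → row m ∈ Submodule.span R (Set.range v) := by
    have base : ∀ m : ℤ, m ≤ (k : ℤ) - d → row m ∈ Submodule.span R (Set.range v) := by
      intro m hm
      by_cases hm2 : m < - ((d : ℤ) - 1)
      · have : row m = 0 := by
          ext j
          exact hneg _ (by have := j.2; omega)
        rw [this]; exact zero_mem _
      · refine Submodule.subset_span ⟨⟨(m + (d - 1)).toNat, by omega⟩, ?_⟩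
        simp only [v]
        congr 1
        omega
    intro B
    induction B with
    | zero => intro m hm; exact base m (by push_cast at hm; omega)
    | succ B ih =>
      intro m hm
      by_cases hm2 : m ≤ (k : ℤ) - d
      · exact base m hm2
      · have : row m = ∑ a ∈ Finset.range (m + d).toNat, c a • row (m - a - 1) := by
          ext j
          rw [Finset.sum_apply]
          simp only [row, Pi.smul_apply]
          rw [hrel (m + j) (by omega) (m + d).toNat (by have := j.2; omega)]
          refine Finset.sum_congr rfl fun a _ => ?_
          congr 2
          ring
        rw [this]
        refine Submodule.sum_mem _ fun a _ => Submodule.smul_mem _ _ (ih _ ?_)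
        push_cast at hm
        omega
  have hmain : ∀ s : Fin d → Fin k, (Matrix.of fun i => v (s i)).det ∈ T := by
    intro s
    by_cases hs : Function.Injective s
    · set σ : Equiv.Perm (Fin d) := Tuple.sort s
      have hmono : StrictMono (s ∘ σ) := 
        (Tuple.monotone_sort s).strictMono_of_injective (hs.comp σ.injective)
      obtain ⟨l1, l2, l3⟩ := lamOf_spec hk _ hmono
      set τ : Equiv.Perm (Fin d) := Fin.revPerm.trans σ
      have hdet := Matrix.det_permute τ (Matrix.of fun i => v (s i))
      have hmem : ((Matrix.of fun i => v (s i)).submatrix τ id).det ∈ T := by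
        refine Submodule.subset_span ⟨_, l1, l2, ?_⟩
        congr 1
        ext i j
        simp only [Matrix.submatrix_apply, Matrix.of_apply, v, row, id]
        rw [l3]
        congr 1
        have : (i.rev : ℕ) = d - 1 - i := by rw [Fin.val_rev]; omega
        have hi := i.2
        have e1 : (((s ∘ σ) i.rev : Fin k) : ℕ) = (s (τ i) : ℕ) := rfl
        rw [e1, this]
        omega
      rw [hdet] at hmem
      rcases Int.units_eq_one_or (Equiv.Perm.sign τ) with h1 | h1
      · rw [h1] at hmem; simpa using hmem
      · rw [h1] at hmem; simpa using hmem
    · rw [Function.Injective] at hs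
      push Not at hs
      obtain ⟨i, j, hij, hne⟩ := hs
      rw [Matrix.det_zero_of_row_eq hne (show v (s i) = v (s j) by rw [hij])]
      exact zero_mem _
  have hcoef : ∀ i, ∃ w : Fin k → R, ∑ s, w s • v s = row (m i) := fun i => by
    rw [← Submodule.mem_span_range_iff_exists_fun]
    exact hrow ((m i).toNat + 1) _ (by omega)
  choose w hw using hcoef
  let D : MultilinearMap R (fun _ : Fin d => Fin d → Q) Q := 
    (Matrix.detRowAlternating (n := Fin d) (R := Q)).toMultilinearMap.restrictScalars R
  have h1 : (Matrix.of fun i j : Fin d => h (m i + ((j : ℕ) : ℤ))).det = 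
      D (fun i => ∑ s, w i s • v s) := by
    simp only [hw]
    rfl
  rw [h1, MultilinearMap.map_sum]
  refine Submodule.sum_mem _ fun s _ => ?_
  rw [MultilinearMap.map_smul_univ]
  exact Submodule.smul_mem _ _ (hmain s)

/-- `y`-part of the Jacobi-Trudi entries inside the big polynomial ring. -/
noncomputable def hYz (n k d : ℕ) (m : ℤ) : MvPolynomial (Fin n ⊕ Fin d ⊕ Fin k) ℤ :=
  rename (Sum.inr ∘ Sum.inl) (hsymmZidx (Fin d) ℤ m)

theorem hYz_eq (n k d : ℕ) (m : ℤ) : hYz n k d m = aeval (fun j : Fin d => 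
    (X (Sum.inr (Sum.inl j)) : MvPolynomial (Fin n ⊕ Fin d ⊕ Fin k) ℤ)) (hsymmZidx (Fin d) ℤ m) := by
  have h := aeval_rename (R := ℤ) (Sum.inr ∘ Sum.inl : Fin d → Fin n ⊕ Fin d ⊕ Fin k)
    (X : _ → MvPolynomial (Fin n ⊕ Fin d ⊕ Fin k) ℤ) (hsymmZidx (Fin d) ℤ m)
  rw [aeval_X_left] at h
  exact h

theorem alternant_expansion (n k d : ℕ) : ∃ D : MvPolynomial (Fin n ⊕ Fin d ⊕ Fin k) ℤ, D ≠ 0 ∧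
    ∀ a : Fin d → ℕ, (Matrix.of fun i j : Fin d => 
      (X (Sum.inr (Sum.inl j)) : MvPolynomial (Fin n ⊕ Fin d ⊕ Fin k) ℤ) ^ (a i + i.rev)).det =
      (Matrix.of fun i j : Fin d => hYz n k d ((a i : ℤ) - ((i : ℕ) : ℤ) + ((j : ℕ) : ℤ))).det * D := by
  obtain ⟨q, hq⟩ := pow_eq_hsymm (fun j : Fin d => 
    (X (Sum.inr (Sum.inl j)) : MvPolynomial (Fin n ⊕ Fin d ⊕ Fin k) ℤ))
  have key : ∀ a : Fin d → ℕ, (Matrix.of fun i j : Fin d => 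
      (X (Sum.inr (Sum.inl j)) : MvPolynomial (Fin n ⊕ Fin d ⊕ Fin k) ℤ) ^ (a i)) = 
      (Matrix.of fun i j : Fin d => hYz n k d ((a i : ℤ) - ((d : ℤ) - 1) + ((j : ℕ) : ℤ))) * 
      Matrix.of q := by
    intro a
    ext1 i j
    rw [Matrix.mul_apply, Matrix.of_apply, hq]
    refine Finset.sum_congr rfl fun l _ => ?_
    rw [Matrix.of_apply, Matrix.of_apply, hYz_eq]
    congr 2
  refine ⟨(Matrix.of q).det, fun h0 => ?_, fun a => ?_⟩
  · have h1 := congrArg Matrix.det (key (fun i => i))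
    rw [Matrix.det_mul, h0, mul_zero] at h1
    have h2 : (Matrix.of fun i j : Fin d => 
      (X (Sum.inr (Sum.inl j)) : MvPolynomial (Fin n ⊕ Fin d ⊕ Fin k) ℤ) ^ (i : ℕ)) = 
      (Matrix.vandermonde (fun j : Fin d => (X (Sum.inr (Sum.inl j)) : MvPolynomial (Fin n ⊕ Fin d ⊕ Fin k) ℤ))).transpose := rfl
    rw [h2, Matrix.det_transpose] at h1
    refine Matrix.det_vandermonde_ne_zero_iff.2 ?_ h1
    intro i j hij
    simpa using X_injective hij
  · rw [key, Matrix.det_mul]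
    congr 3
    ext1 i
    ext1 j
    congr 1
    have : (i.rev : ℕ) = d - 1 - i := by rw [Fin.val_rev]; omega
    rw [this]
    have hi := i.2
    omega

theorem jt_zero (n k d : ℕ) : (Matrix.of fun i j : Fin d => 
    hYz n k d (((0 : ℕ) : ℤ) - ((i : ℕ) : ℤ) + ((j : ℕ) : ℤ))).det = 1 := by
  rw [Matrix.det_of_isUpperTriangular]
  · refine Finset.prod_eq_one fun i _ => ?_
    simp [hYz, hsymmZidx]
  · intro i j hij
    have : (j : ℕ) < i := hij
    simp only [Matrix.of_apply, hYz, hsymmZidx]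
    rw [if_neg (by omega), map_zero]

theorem inv_expansion (n k d : ℕ) (f : MvPolynomial (Fin n ⊕ Fin d ⊕ Fin k) ℤ) 
    (hf : f ∈ invZ3 n k d) : 
    f = ∑ m ∈ f.support, C (coeff m f) * (∏ i, X (Sum.inl i) ^ m (Sum.inl i)) * 
      (∏ i, X (Sum.inr (Sum.inr i)) ^ m (Sum.inr (Sum.inr i))) *
      (Matrix.of fun i j : Fin d => 
        hYz n k d ((m (Sum.inr (Sum.inl i)) : ℤ) - ((i : ℕ) : ℤ) + ((j : ℕ) : ℤ))).det := by
  obtain ⟨D, hD0, hD⟩ := alternant_expansion n k d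
  have hf' : ∀ σ : Equiv.Perm (Fin d), f = ∑ m ∈ f.support, 
      C (coeff m f) * (∏ i, X (Sum.inl i) ^ m (Sum.inl i)) * 
      (∏ i, X (Sum.inr (Sum.inr i)) ^ m (Sum.inr (Sum.inr i))) *
      ∏ i, X (Sum.inr (Sum.inl (σ i))) ^ m (Sum.inr (Sum.inl i)) := by
    intro σ
    have h1 := hf σ
    conv_lhs => rw [← h1, f.as_sum, map_sum]
    refine Finset.sum_congr rfl fun m _ => ?_
    rw [rename_monomial, monomial_eq, Finsupp.prod_mapDomain_index (by simp) (by simp [pow_add]),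
      Finsupp.prod_fintype _ _ (by simp), Fintype.prod_sum_type, Fintype.prod_sum_type]
    simp only [permY3, Equiv.sumCongr_apply, Sum.map_inl, Sum.map_inr, Equiv.refl_apply]
    ring
  have hDelta := hD (fun _ => 0)
  rw [jt_zero, one_mul] at hDelta
  apply mul_right_cancel₀ hD0
  rw [Finset.sum_mul]
  simp only [mul_assoc, ← hD]
  rw [← hDelta, ← Matrix.det_transpose, Matrix.det_apply', Finset.mul_sum]
  have h3 : ∀ σ : Equiv.Perm (Fin d), f * (((Equiv.Perm.sign σ : ℤ) : MvPolynomial (Fin n ⊕ Fin d ⊕ Fin k) ℤ) * 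
      ∏ i, (Matrix.of fun i j : Fin d => 
      (X (Sum.inr (Sum.inl j)) : MvPolynomial (Fin n ⊕ Fin d ⊕ Fin k) ℤ) ^ (0 + (i.rev : ℕ))).transpose (σ i) i) = 
      ∑ m ∈ f.support, C (coeff m f) * ((∏ i, X (Sum.inl i) ^ m (Sum.inl i)) * 
      ((∏ i, X (Sum.inr (Sum.inr i)) ^ m (Sum.inr (Sum.inr i))) *
       (((Equiv.Perm.sign σ : ℤ) : MvPolynomial (Fin n ⊕ Fin d ⊕ Fin k) ℤ) * 
      ∏ i, X (Sum.inr (Sum.inl (σ i))) ^ (m (Sum.inr (Sum.inl i)) + (i.rev : ℕ))))) := by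
    intro σ
    conv_lhs => rw [hf' σ, Finset.sum_mul]
    refine Finset.sum_congr rfl fun m _ => ?_
    simp only [Matrix.transpose_apply, Matrix.of_apply, zero_add, pow_add, Finset.prod_mul_distrib]
    ring
  rw [Finset.sum_congr rfl fun σ _ => h3 σ, Finset.sum_comm]
  refine Finset.sum_congr rfl fun m _ => ?_
  rw [← Matrix.det_transpose, Matrix.det_apply', Finset.mul_sum, Finset.mul_sum, Finset.mul_sum]
  rfl

theorem ringHom_eq_aeval {σ S : Type*} [CommRing S] (φ : MvPolynomial σ ℤ →+* S) 
    (p : MvPolynomial σ ℤ) : φ p = aeval (fun i => φ (X i)) p := by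
  have : φ = (aeval (fun i => φ (X i)) : MvPolynomial σ ℤ →ₐ[ℤ] S).toRingHom := by
    apply MvPolynomial.ringHom_ext
    · intro r
      simp
    · intro i
      simp
  exact congrArg (fun f => f p) this

theorem yinv (n k d : ℕ) (p : MvPolynomial (Fin d) ℤ) (hp : p.IsSymmetric) : 
    rename (Sum.inr ∘ Sum.inl) p ∈ invZ3 n k d := by
  intro g
  rw [rename_rename]
  conv_rhs => rw [← hp g, rename_rename]
  rfl

/-- The embedding of the `x`-polynomials. -/
noncomputable def xHomZ (n k d : ℕ) :
    MvPolynomial (Fin n) ℤ →ₐ[ℤ] ↥(invZ3 n k d) :=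
  AlgHom.codRestrict (rename Sum.inl) (invZ3 n k d) (fun f g => by
    show rename (⇑(permY3 n k d g)) (rename Sum.inl f) = _
    rw [rename_rename]
    congr 1)

theorem hsymmZidx_symm (d : ℕ) (m : ℤ) : (hsymmZidx (Fin d) ℤ m).IsSymmetric := by
  unfold hsymmZidx
  split_ifs
  · exact hsymm_isSymmetric _ _ _
  · exact IsSymmetric.zero

/-- `h_m(y)` as an invariant. -/
noncomputable def hA (n k d : ℕ) (m : ℤ) : invZ3 n k d := 
  ⟨hYz n k d m, yinv n k d _ (hsymmZidx_symm d m)⟩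

/-- `e_m(y)` as an invariant. -/
noncomputable def eA (n k d : ℕ) (m : ℕ) : invZ3 n k d := 
  ⟨eY3Z n k d m, yinv n k d _ (esymm_isSymmetric _ _ _)⟩

theorem hYz_nat (n k d m : ℕ) : hYz n k d (m : ℤ) = hY3Z n k d m := by
  simp [hYz, hY3Z, hsymmZidx]

theorem hA_neg (n k d : ℕ) (m : ℤ) (hm : m < 0) : hA n k d m = 0 := by
  apply Subtype.ext
  simp [hA, hYz, hsymmZidx, not_le.2 hm]

theorem algebraMap_coe (n k d : ℕ) (r : MvPolynomial (Fin k) ℤ) : 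
    ((algebraMap (MvPolynomial (Fin k) ℤ) (invZ3 n k d) r : invZ3 n k d) : 
      MvPolynomial (Fin n ⊕ Fin d ⊕ Fin k) ℤ) = rename (Sum.inr ∘ Sum.inr) r := rfl

theorem xHomZ_coe (n k d : ℕ) (r : MvPolynomial (Fin n) ℤ) : 
    ((xHomZ n k d r : invZ3 n k d) : 
      MvPolynomial (Fin n ⊕ Fin d ⊕ Fin k) ℤ) = rename Sum.inl r := rfl

theorem det_coe (n k d : ℕ) (M : Matrix (Fin d) (Fin d) (invZ3 n k d)) : 
    ((M.det : invZ3 n k d) : MvPolynomial (Fin n ⊕ Fin d ⊕ Fin k) ℤ) = 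
      (Matrix.of fun i j => (M i j : MvPolynomial (Fin n ⊕ Fin d ⊕ Fin k) ℤ)).det := 
  (invZ3 n k d).val.toRingHom.map_det M

/-- The `t`-coefficient of a monomial. -/
noncomputable def tCoef (n k d : ℕ) (f : invZ3 n k d) (m : (Fin n ⊕ Fin d ⊕ Fin k) →₀ ℕ) : 
    MvPolynomial (Fin k) ℤ := C (coeff m f.1) * ∏ i, X i ^ m (Sum.inr (Sum.inr i))

/-- The determinant of a monomial. -/
noncomputable def hDet (n k d : ℕ) (m : Fin d → ℕ) : invZ3 n k d := 
  (Matrix.of fun i j : Fin d => 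
        hA n k d ((m i : ℤ) - ((i : ℕ) : ℤ) + ((j : ℕ) : ℤ))).det

theorem hDet_coe (n k d : ℕ) (m : Fin d → ℕ) : (hDet n k d m).1 = 
    rename (Sum.inr ∘ Sum.inl) (schurPoly d m) := by
  rw [hDet, det_coe, schurPoly]
  exact ((rename (Sum.inr ∘ Sum.inl) : MvPolynomial (Fin d) ℤ →ₐ[ℤ] MvPolynomial (Fin n ⊕ Fin d ⊕ Fin k) ℤ).toRingHom.map_det _).symm

theorem inv_expansionA (n k d : ℕ) (f : invZ3 n k d) : 
    f = ∑ m ∈ f.1.support, tCoef n k d f m • 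
      ((∏ i, xHomZ n k d (X i) ^ m (Sum.inl i)) * hDet n k d (fun i => m (Sum.inr (Sum.inl i)))) := by
  apply Subtype.ext
  conv_lhs => rw [inv_expansion n k d f.1 f.2]
  rw [AddSubmonoidClass.coe_finsetSum]
  refine Finset.sum_congr rfl fun m _ => ?_
  rw [Algebra.smul_def, MulMemClass.coe_mul, MulMemClass.coe_mul, algebraMap_coe, tCoef, hDet, det_coe,
    SubmonoidClass.coe_finsetProd]
  simp only [map_mul, map_prod, map_pow, rename_C, rename_X, Function.comp, SubmonoidClass.coe_pow, xHomZ_coe,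
    Matrix.of_apply]
  simp only [hA]
  ring

theorem hrel_of {R Q : Type*} [CommRing R] [CommRing Q] [Algebra R Q] (h : ℕ → Q) (e : ℕ → R)
    (e0 : e 0 = 1) (r : ℕ) 
    (hr : ∑ j ∈ Finset.range (r + 1), (-1 : Q) ^ j * (algebraMap R Q (e (r - j)) * h j) = 0) : 
    h r = ∑ a ∈ Finset.range r, ((-1) ^ a * e (a + 1)) • h (r - 1 - a) := by
  rw [Finset.sum_range_succ, Nat.sub_self, e0, map_one, one_mul] at hr
  rw [Finset.sum_congr rfl (g := fun a => - ((-1 : Q) ^ r * ((-1 : Q) ^ (r - 1 - a) * (algebraMap R Q (e (r - (r - 1 - a))) * h (r - 1 - a))))),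
    Finset.sum_range_reflect (fun j => - ((-1 : Q) ^ r * ((-1 : Q) ^ j * (algebraMap R Q (e (r - j)) * h j)))),
    Finset.sum_neg_distrib, ← Finset.mul_sum, eq_neg_of_add_eq_zero_left hr, mul_neg, neg_neg, ← mul_assoc,
    ← pow_add, ← two_mul, pow_mul]
  · simp
  · intro a ha
    rw [Finset.mem_range] at ha
    rw [Algebra.smul_def, map_mul, map_pow, map_neg, map_one, show r - (r - 1 - a) = a + 1 by omega]
    have : (-1 : Q) ^ r = - ((-1) ^ a * (-1) ^ (r - 1 - a)) := by
      rw [← pow_add, show r = (a + (r - 1 - a)) + 1 by omega, pow_succ,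
        show a + (r - 1 - a) + 1 - 1 - a = r - 1 - a by omega]
      ring
    rw [this]
    have h2 : (-1 : Q) ^ (r - 1 - a) * (-1 : Q) ^ (r - 1 - a) = 1 := by
      rw [← pow_add, ← two_mul, pow_mul]; simp
    linear_combination (- (-1 : Q) ^ a * (algebraMap R Q (e (a + 1))) * h (r - 1 - a)) * h2

theorem he_rel (n k d : ℕ) : PowerSeries.mk (fun m => hA n k d (m : ℤ)) * 
    PowerSeries.mk (fun j => (-1) ^ j * eA n k d j) = 1 := by
  have h1 := hsymm_gf_neg (fun j : Fin d => (X (Sum.inr (Sum.inl j)) : MvPolynomial (Fin n ⊕ Fin d ⊕ Fin k) ℤ))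
  rw [esymm_gf] at h1
  have hh : ∀ p : MvPolynomial (Fin d) ℤ, aeval (fun j : Fin d => (X (Sum.inr (Sum.inl j)) : MvPolynomial (Fin n ⊕ Fin d ⊕ Fin k) ℤ)) p = rename (Sum.inr ∘ Sum.inl) p := by
    intro p
    have := ringHom_eq_aeval (rename (Sum.inr ∘ Sum.inl) : MvPolynomial (Fin d) ℤ →ₐ[ℤ] MvPolynomial (Fin n ⊕ Fin d ⊕ Fin k) ℤ).toRingHom p
    simp only [AlgHom.toRingHom_eq_coe, RingHom.coe_coe, rename_X] at this
    exact this.symm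
  have h2 := congrArg (PowerSeries.rescale (-1)) h1
  rw [map_mul, PowerSeries.rescale_mk, PowerSeries.rescale_mk, map_one] at h2
  have h3 : ∀ m : ℕ, ∀ z : MvPolynomial (Fin n ⊕ Fin d ⊕ Fin k) ℤ, (-1) ^ m * ((-1) ^ m * z) = z := by
    intro m z
    rw [← mul_assoc, ← pow_add, ← two_mul, pow_mul]; simp
  simp only [h3] at h2
  apply PowerSeries.map_injective (invZ3 n k d).val.toRingHom Subtype.val_injective
  rw [map_mul, map_one, ← h2]
  congr 1
  · ext1 m
    simp only [PowerSeries.coeff_map, PowerSeries.coeff_mk]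
    exact (hYz_nat n k d m).trans (hh _).symm
  · ext1 m
    simp only [PowerSeries.coeff_map, PowerSeries.coeff_mk]
    rw [map_mul, map_pow, map_neg, map_one]
    exact congrArg (fun z => (-1) ^ m * z) (hh (esymm (Fin d) ℤ m)).symm

/-- the generator relations -/
theorem genTY_A (n k d r : ℕ) : (∑ j ∈ Finset.range (r + 1), (-1 : invZ3 n k d) ^ j * 
    (algebraMap (MvPolynomial (Fin k) ℤ) (invZ3 n k d) (esymm (Fin k) ℤ (r - j)) * hA n k d (j : ℤ))).1 = 
    genTY3Z n k d r := by
  rw [AddSubmonoidClass.coe_finsetSum, genTY3Z]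
  refine Finset.sum_congr rfl fun j _ => ?_
  rw [← hYz_nat]
  rfl

theorem genXY_A (n k d r : ℕ) : (∑ j ∈ Finset.range (r + 1), (-1 : invZ3 n k d) ^ j * 
    (xHomZ n k d (esymm (Fin n) ℤ (r - j)) * hA n k d (j : ℤ))).1 = 
    genXY3Z n k d r := by
  rw [AddSubmonoidClass.coe_finsetSum, genXY3Z]
  refine Finset.sum_congr rfl fun j _ => ?_
  rw [← hYz_nat]
  rfl

theorem genPow_A (n k d : ℕ) (i : Fin n) : (∑ j ∈ Finset.range (d + 1), (-1 : invZ3 n k d) ^ j * 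
    (xHomZ n k d (X i) ^ (d - j) * eA n k d j)).1 = 
    genPow3Z n k d i := by
  rw [AddSubmonoidClass.coe_finsetSum, genPow3Z]
  refine Finset.sum_congr rfl fun j _ => ?_
  have : (X (Sum.inl i) : MvPolynomial (Fin n ⊕ Fin d ⊕ Fin k) ℤ) = (xHomZ n k d (X i)).1 := by
    rw [xHomZ_coe, rename_X]
  rw [this]
  rfl

/-- Invariants not involving the `x`-variables. -/
noncomputable def Lsub (n k d : ℕ) : Subalgebra ℤ ↥(invZ3 n k d) := 
  (supported ℤ (Set.range (Sum.inr : Fin d ⊕ Fin k → Fin n ⊕ Fin d ⊕ Fin k))).comap (invZ3 n k d).val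

theorem rename_inr_supported (n k d : ℕ) {τ : Type*} (g : τ → Fin d ⊕ Fin k) (p : MvPolynomial τ ℤ) : 
    rename (fun i => (Sum.inr (g i) : Fin n ⊕ Fin d ⊕ Fin k)) p ∈ 
      supported ℤ (Set.range (Sum.inr : Fin d ⊕ Fin k → Fin n ⊕ Fin d ⊕ Fin k)) := by
  classical
  rw [mem_supported]
  intro v hv
  have := vars_rename _ _ hv
  rw [Finset.mem_image] at this
  obtain ⟨i, _, rfl⟩ := this
  exact ⟨_, rfl⟩

theorem algebraMap_mem_L (n k d : ℕ) (r : MvPolynomial (Fin k) ℤ) : 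
    algebraMap (MvPolynomial (Fin k) ℤ) (invZ3 n k d) r ∈ Lsub n k d := 
  rename_inr_supported n k d Sum.inr r

theorem hA_mem_L (n k d : ℕ) (m : ℤ) : hA n k d m ∈ Lsub n k d := 
  rename_inr_supported n k d Sum.inl _

theorem eA_mem_L (n k d : ℕ) (m : ℕ) : eA n k d m ∈ Lsub n k d := 
  rename_inr_supported n k d Sum.inl _

theorem hDet_mem_L (n k d : ℕ) (m : Fin d → ℕ) : hDet n k d m ∈ Lsub n k d := by
  show (hDet n k d m).1 ∈ supported ℤ (Set.range (Sum.inr : Fin d ⊕ Fin k → Fin n ⊕ Fin d ⊕ Fin k))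
  rw [hDet_coe]
  exact rename_inr_supported n k d Sum.inl _

theorem L_support (n k d : ℕ) (f : invZ3 n k d) (hf : f ∈ Lsub n k d) (m) (hm : m ∈ f.1.support) 
    (i : Fin n) : m (Sum.inl i) = 0 := by
  have h : f.1 ∈ supported ℤ (Set.range (Sum.inr : Fin d ⊕ Fin k → Fin n ⊕ Fin d ⊕ Fin k)) := hf
  rw [mem_supported] at h
  by_contra h0
  have : (Sum.inl i : Fin n ⊕ Fin d ⊕ Fin k) ∈ f.1.vars := by
    rw [mem_vars_iff_mem_support]
    exact ⟨m, hm, by simpa using h0⟩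
  obtain ⟨z, hz⟩ := h this
  exact absurd hz (by simp)

theorem hQ_rel (n k d : ℕ) (hk : d ≤ k) {Q : Type*} [CommRing Q] [Algebra (MvPolynomial (Fin k) ℤ) Q]
    (π : invZ3 n k d →ₐ[MvPolynomial (Fin k) ℤ] Q) (hker : ∀ f : invZ3 n k d, f.1 ∈ Jtgens3Z n k d → π f = 0) :
    ∀ m : ℤ, (k : ℤ) - d < m → ∀ M : ℕ, m ≤ M → 
      π (hA n k d m) = 
      ∑ a ∈ Finset.range M, ((-1) ^ a * esymm (Fin k) ℤ (a + 1)) • π (hA n k d (m - a - 1)) := by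
  intro m hm M hM
  obtain ⟨r, rfl⟩ := Int.eq_ofNat_of_zero_le (a := m) (by omega)
  have h2 : π (∑ j ∈ Finset.range (r + 1), (-1 : invZ3 n k d) ^ j * 
    (algebraMap (MvPolynomial (Fin k) ℤ) (invZ3 n k d) (esymm (Fin k) ℤ (r - j)) * hA n k d (j : ℤ))) = 0 := by
    apply hker
    rw [genTY_A]
    exact Or.inl (Or.inl ⟨r, by omega, rfl⟩)
  have h1 := hrel_of (R := MvPolynomial (Fin k) ℤ) (fun j : ℕ => π (hA n k d (j : ℤ)))
    (fun a => esymm (Fin k) ℤ a) (esymm_zero _ _) r (by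
      rw [map_sum] at h2
      rw [← h2]
      refine Finset.sum_congr rfl fun j _ => ?_
      rw [map_mul, map_mul, map_pow, map_neg, map_one, AlgHom.commutes])
  have hMr : r ≤ M := by exact_mod_cast hM
  rw [← Finset.sum_subset (Finset.range_mono hMr)]
  · refine h1.trans (Finset.sum_congr rfl fun a ha => ?_)
    rw [Finset.mem_range] at ha
    congr 3
    omega
  · intro a _ ha
    rw [Finset.mem_range] at ha
    rw [hA_neg _ _ _ _ (by omega), map_zero, smul_zero]

theorem L_span (n k d : ℕ) (hk : d ≤ k) {Q : Type*} [CommRing Q] [Algebra (MvPolynomial (Fin k) ℤ) Q]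
    (π : invZ3 n k d →ₐ[MvPolynomial (Fin k) ℤ] Q) (hker : ∀ f : invZ3 n k d, f.1 ∈ Jtgens3Z n k d → π f = 0) 
    (f : invZ3 n k d) (hf : f ∈ Lsub n k d) : 
    π f ∈ Submodule.span (MvPolynomial (Fin k) ℤ) 
      {q | ∃ lam : Fin d → ℕ, Antitone lam ∧ (∀ i, lam i ≤ k - d) ∧ 
        q = π (hDet n k d lam)} := by
  have hdet : ∀ m : Fin d → ℕ, π (hDet n k d m) = 
      (Matrix.of fun i j : Fin d => 
        π (hA n k d ((m i : ℤ) - ((i : ℕ) : ℤ) + ((j : ℕ) : ℤ)))).det := by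
    intro m
    exact RingHom.map_det π.toRingHom _
  rw [inv_expansionA n k d f, map_sum]
  refine Submodule.sum_mem _ fun m hm => ?_
  rw [Finset.prod_eq_one fun i _ => by rw [L_support n k d f hf m hm i, pow_zero], one_mul, map_smul]
  refine Submodule.smul_mem _ _ ?_
  have := jt_span (R := MvPolynomial (Fin k) ℤ) hk (fun z => π (hA n k d z)) 
    (fun z hz => by rw [hA_neg _ _ _ _ hz, map_zero]) _ (hQ_rel n k d hk π hker) 
    (fun i => (m (Sum.inr (Sum.inl i)) : ℤ) - ((i : ℕ) : ℤ))
  simp only [hdet]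
  exact this

/-- The Cauchy polynomial of the `y` variables, with coefficients in `L`. -/
noncomputable def pL (n k d : ℕ) : Polynomial (Lsub n k d) := ∑ j ∈ Finset.range (d + 1), 
      Polynomial.C ((-1) ^ j * (⟨eA n k d j, eA_mem_L n k d j⟩ : Lsub n k d)) * Polynomial.X ^ (d - j)

theorem pL_eq (n k d : ℕ) : ∃ q : Polynomial (Lsub n k d), q.degree < (d : ℕ) ∧ 
    pL n k d = Polynomial.X ^ d + q := by
  refine ⟨∑ j ∈ Finset.range d, 
      Polynomial.C ((-1) ^ (j + 1) * (⟨eA n k d (j + 1), eA_mem_L n k d (j + 1)⟩ : Lsub n k d)) * Polynomial.X ^ (d - (j + 1)), ?_, ?_⟩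
  · refine (Polynomial.degree_sum_le _ _).trans_lt ?_
    refine (Finset.sup_lt_iff (WithBot.bot_lt_coe d)).2 ?_
    intro j hj
    rw [Finset.mem_range] at hj
    refine (Polynomial.degree_C_mul_X_pow_le _ _).trans_lt ?_
    exact WithBot.coe_lt_coe.2 (by omega : d - (j + 1) < d)
  · rw [pL, Finset.sum_range_succ', add_comm]
    congr 1
    have : (⟨eA n k d 0, eA_mem_L n k d 0⟩ : Lsub n k d) = 1 := by
      apply Subtype.ext
      apply Subtype.ext
      simp [eA, eY3Z]
    rw [this]
    simp

theorem C_span (n k d : ℕ) (hd : 1 ≤ d) (hk : d ≤ k) (hn : k ≤ n) 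
    {Q : Type*} [CommRing Q] [Algebra (MvPolynomial (Fin k) ℤ) Q]
    (π : invZ3 n k d →ₐ[MvPolynomial (Fin k) ℤ] Q) (hker : ∀ f : invZ3 n k d, f.1 ∈ Jtgens3Z n k d → π f = 0)
    (hsurj : Function.Surjective π) : 
    Submodule.span (MvPolynomial (Fin k) ℤ) (π '' (Subtype.val ⁻¹' CsetZ3 n k d)) = ⊤ := by
  rw [eq_top_iff]
  rintro q -
  let x : Fin n → Q := fun i => π (xHomZ n k d (X i))
  obtain ⟨q0, hq0, hq0'⟩ := pL_eq n k d
  have hmon : (pL n k d).Monic := by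
    rw [hq0']; exact Polynomial.monic_X_pow_add hq0
  have hnat : (pL n k d).natDegree = d := by
    rw [hq0']
    apply Polynomial.natDegree_eq_of_degree_eq_some
    rw [Polynomial.degree_add_eq_left_of_degree_lt, Polynomial.degree_X_pow]
    rwa [Polynomial.degree_X_pow]
  have hx : ∀ p : MvPolynomial (Fin n) ℤ, aeval x p = π (xHomZ n k d p) := by
    intro p
    exact (ringHom_eq_aeval (π.toRingHom.comp (xHomZ n k d).toRingHom) p).symm
  let ψ : Lsub n k d →+* Q := π.toRingHom.comp (Lsub n k d).val.toRingHom
  let _ : Algebra (Lsub n k d) Q := ψ.toAlgebra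
  have hψ : ∀ l : Lsub n k d, algebraMap (Lsub n k d) Q l = π l.1 := fun l => rfl
  have key := span_good d n d (Lsub n k d) Q x (pL n k d) (pL n k d)
    hmon hmon hnat hnat dvd_rfl ?_ ?_ ?_ q
  · have hind := Submodule.span_induction (p := fun q _ => ∀ l : Lsub n k d, l • q ∈ Submodule.span (MvPolynomial (Fin k) ℤ)
      (π '' (Subtype.val ⁻¹' CsetZ3 n k d))) ?_ (fun l => by rw [smul_zero]; exact zero_mem _) 
      (fun a b _ _ ha hb l => by rw [smul_add]; exact add_mem (ha l) (hb l))
      (fun l a _ ha l' => by rw [smul_smul]; exact ha _) key 1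
    · rwa [one_smul] at hind
    · rintro _ ⟨a, ha, rfl⟩ l
      rw [Algebra.smul_def, hψ]
      have h1 := L_span n k d hk π hker l.1 l.2
      refine Submodule.span_induction (p := fun q _ => q * ∏ i, x i ^ a i ∈ Submodule.span (MvPolynomial (Fin k) ℤ)
        (π '' (Subtype.val ⁻¹' CsetZ3 n k d))) ?_ (by rw [zero_mul]; exact zero_mem _) 
        (fun _ _ _ _ h h' => by rw [add_mul]; exact add_mem h h')
        (fun r z _ hz => by rw [smul_mul_assoc]; exact Submodule.smul_mem _ _ hz) h1
      rintro _ ⟨lam, hl1, hl2, rfl⟩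
      refine Submodule.subset_span ⟨(∏ i, xHomZ n k d (X i) ^ a i) * hDet n k d lam, ?_, ?_⟩
      · refine ⟨a, (isSubstaircase_iff n d hd a).2 ha, lam, hl1, hl2, ?_⟩
        rw [MulMemClass.coe_mul, hDet_coe, SubmonoidClass.coe_finsetProd]
        simp only [SubmonoidClass.coe_pow, xHomZ_coe, rename_X]
      · rw [map_mul, map_prod, mul_comm]
        simp only [map_pow, x]
  · intro i
    have h1 : π (∑ j ∈ Finset.range (d + 1), (-1 : invZ3 n k d) ^ j * 
      (xHomZ n k d (X i) ^ (d - j) * eA n k d j)) = 0 := by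
      apply hker
      rw [genPow_A]
      exact Or.inr ⟨i, rfl⟩
    rw [← h1, pL, map_sum, map_sum]
    refine Finset.sum_congr rfl fun j _ => ?_
    rw [map_mul, Polynomial.aeval_C, map_pow, Polynomial.aeval_X, hψ, MulMemClass.coe_mul, map_mul, map_mul, map_mul,
      map_pow, map_pow, SubmonoidClass.coe_pow, map_pow]
    simp only [x, map_neg, map_one, NegMemClass.coe_neg, OneMemClass.coe_one]
    ring
  · have h1 := dvd_of_rel (hk.trans hn) (fun j : ℕ => π (hA n k d (j : ℤ)))
      (fun j : ℕ => π (eA n k d j)) ?_ ?_ x ?_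
    · convert h1 using 1
      rw [pL, Polynomial.map_sum]
      refine Finset.sum_congr rfl fun j _ => ?_
      rw [Polynomial.map_mul, Polynomial.map_pow, Polynomial.map_C, Polynomial.map_X, hψ, MulMemClass.coe_mul, map_mul,
        SubmonoidClass.coe_pow, map_pow]
      simp only [map_neg, map_one, NegMemClass.coe_neg, OneMemClass.coe_one]
    · have := congrArg (PowerSeries.map π.toRingHom) (he_rel n k d)
      rw [map_mul, map_one] at this
      rw [← this]
      congr 1
      · ext1 m
        simp only [PowerSeries.coeff_map, PowerSeries.coeff_mk]
        show _ = π ((-1) ^ m * eA n k d m)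
        rw [map_mul, map_pow, map_neg, map_one]
    · intro j hj
      have : eA n k d j = 0 := by
        apply Subtype.ext
        have h0 : esymm (Fin d) ℤ j = 0 := by
          rw [esymm, Finset.powersetCard_eq_empty.2 (by simpa using hj), Finset.sum_empty]
        simp [eA, eY3Z, h0]
      rw [this, map_zero]
    · intro r hr
      have h2 : π (∑ j ∈ Finset.range (r + 1), (-1 : invZ3 n k d) ^ j * 
          (xHomZ n k d (esymm (Fin n) ℤ (r - j)) * hA n k d (j : ℤ))) = 0 := by
        apply hker
        rw [genXY_A]
        exact Or.inl (Or.inr ⟨r, hr, rfl⟩)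
      rw [← h2, map_sum]
      refine Finset.sum_congr rfl fun j _ => ?_
      rw [map_mul, map_mul, map_pow, map_neg, map_one, hx]
  · rw [eq_top_iff]
    rintro z -
    obtain ⟨f, rfl⟩ := hsurj z
    rw [inv_expansionA n k d f, map_sum]
    refine Subalgebra.sum_mem _ fun m _ => ?_
    rw [map_smul, Algebra.smul_def, map_mul, mul_left_comm, map_prod]
    refine Subalgebra.mul_mem _ (Subalgebra.prod_mem _ fun i _ => ?_) ?_
    · rw [map_pow]
      exact Subalgebra.pow_mem _ (Algebra.subset_adjoin (Set.mem_range_self i)) _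
    · rw [← AlgHom.commutes π, ← map_mul]
      have hm := mul_mem (algebraMap_mem_L n k d (tCoef n k d f m)) (hDet_mem_L n k d (fun i => m (Sum.inr (Sum.inl i))))
      exact Subalgebra.algebraMap_mem (Algebra.adjoin (Lsub n k d) (Set.range x)) (Subtype.mk _ hm)

theorem pow_vanish {S : Type*} [CommRing S] {d : ℕ} (y : Fin d → S) (x : S) (j0 : Fin d) (hx : x = y j0) : 
    ∑ j ∈ Finset.range (d + 1), (-1 : S) ^ j * (x ^ (d - j) * aeval y (esymm (Fin d) ℤ j)) = 0 := by
  have h := congrArg (Polynomial.eval x) (Multiset.prod_X_sub_X_eq_sum_esymm (Finset.univ.val.map y))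
  rw [Multiset.map_map] at h
  have h1 : Polynomial.eval x (Multiset.map ((fun t => Polynomial.X - Polynomial.C t) ∘ y) Finset.univ.val).prod = 0 := by
    have : (Multiset.map ((fun t => Polynomial.X - Polynomial.C t) ∘ y) Finset.univ.val).prod = 
      ∏ j, (Polynomial.X - Polynomial.C (y j)) := rfl
    rw [this, Polynomial.eval_prod]
    exact Finset.prod_eq_zero (Finset.mem_univ j0) (by simp [hx])
  rw [h1, Polynomial.eval_finsetSum] at h
  simp only [Multiset.card_map, Finset.card_val, Finset.card_univ, Fintype.card_fin] at h
  rw [h]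
  refine Finset.sum_congr rfl fun j _ => ?_
  rw [aeval_esymm_eq_multiset_esymm]
  simp
  ring

/-- The evaluation points. -/
abbrev Pts (n k d : ℕ) : Type := (Fin d ↪o Fin k) × {φ : Fin n → Fin d // Function.Surjective φ}

/-- Evaluation at a point. -/
noncomputable def evB (n k d : ℕ) (z : Pts n k d) : 
    MvPolynomial (Fin n ⊕ Fin d ⊕ Fin k) ℤ →ₐ[ℤ] MvPolynomial (Fin k) ℤ := 
  aeval (Sum.elim (fun i => X (z.1 (z.2.1 i))) (Sum.elim (fun j => X (z.1 j)) X))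

/-- Evaluation at a point, on invariants. -/
noncomputable def evA (n k d : ℕ) (z : Pts n k d) : 
    invZ3 n k d →ₐ[MvPolynomial (Fin k) ℤ] MvPolynomial (Fin k) ℤ := 
  { ((evB n k d z).comp (invZ3 n k d).val).toRingHom with
    commutes' := fun r => by
      show evB n k d z (rename (Sum.inr ∘ Sum.inr) r) = r
      rw [evB, aeval_rename]
      exact aeval_X_left_apply r }

theorem evA_apply (n k d : ℕ) (z : Pts n k d) (f : invZ3 n k d) : evA n k d z f = evB n k d z f.1 := rfl

theorem ev_kill (n k d : ℕ) (z : Pts n k d) (f : MvPolynomial (Fin n ⊕ Fin d ⊕ Fin k) ℤ) 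
    (hf : f ∈ Jtgens3Z n k d) : evB n k d z f = 0 := by
  have hY : ∀ p, evB n k d z (rename (Sum.inr ∘ Sum.inl) p) = aeval (X ∘ z.1) p := by
    intro p
    rw [evB, aeval_rename]; rfl
  have hT : ∀ p, evB n k d z (rename (Sum.inr ∘ Sum.inr) p) = aeval X p := by
    intro p
    rw [evB, aeval_rename]; rfl
  have hX : ∀ p, evB n k d z (rename Sum.inl p) = aeval (fun i => X (z.1 (z.2.1 i))) p := by
    intro p
    rw [evB, aeval_rename]; rfl
  rcases hf with (⟨r, hr, rfl⟩ | ⟨r, hr, rfl⟩) | ⟨i, rfl⟩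
  · have := gen_vanish (X : Fin k → MvPolynomial (Fin k) ℤ) z.1 z.1.injective r hr
    rw [genTY3Z, map_sum]
    refine Eq.trans (Finset.sum_congr rfl fun j _ => ?_) this
    rw [map_mul, map_mul, map_pow, map_neg, map_one, eT3Z, hY3Z, hY, hT]
    congr 3
  · obtain ⟨s, hs⟩ := z.2.2.hasRightInverse
    have := gen_vanish (fun i => (X (z.1 (z.2.1 i)) : MvPolynomial (Fin k) ℤ)) s hs.injective r hr
    rw [genXY3Z, map_sum]
    refine Eq.trans (Finset.sum_congr rfl fun j _ => ?_) this
    rw [map_mul, map_mul, map_pow, map_neg, map_one, eX3Z, hY3Z, hY, hX]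
    have h2 : (X ∘ z.1 : Fin d → MvPolynomial (Fin k) ℤ) = (fun i => X (z.1 (z.2.1 i))) ∘ s := by
      ext1 j
      simp only [Function.comp]
      rw [hs j]
    rw [h2]
    congr 3
  · have := pow_vanish (fun j => (X (z.1 j) : MvPolynomial (Fin k) ℤ)) (X (z.1 (z.2.1 i))) (z.2.1 i) rfl
    rw [genPow3Z, map_sum]
    refine Eq.trans (Finset.sum_congr rfl fun j _ => ?_) this
    rw [map_mul, map_mul, map_pow, map_neg, map_one, eY3Z, hY, map_pow]
    have h3 : evB n k d z (X (Sum.inl i)) = X (z.1 (z.2.1 i)) := by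
      simp [evB]
    rw [h3]
    congr 3

theorem pts_inj (n k d : ℕ) (z w : Pts n k d) (h : ∀ i, z.1 (z.2.1 i) = w.1 (w.2.1 i)) : z = w := by
  obtain ⟨u, φ, hφ⟩ := z
  obtain ⟨v, ψ, hψ⟩ := w
  simp only at h
  have hr : Set.range u = Set.range v := by
    rw [← hφ.range_comp u, ← hψ.range_comp v]
    congr 1
    ext1 i
    exact h i
  have huv : u = v := by
    have := (StrictMono.range_inj u.strictMono v.strictMono).1 hr
    exact DFunLike.coe_injective this
  subst huv
  congr 2
  ext1 i
  exact u.injective (h i)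

/-- Lagrange-type invariants. -/
noncomputable def lagr (n k d : ℕ) (z : Pts n k d) : invZ3 n k d := 
  ∏ i, ∏ c ∈ Finset.univ.erase (z.1 (z.2.1 i)), (xHomZ n k d (X i) - algebraMap (MvPolynomial (Fin k) ℤ) _ (X c))

theorem lagr_eval (n k d : ℕ) (z w : Pts n k d) : evA n k d w (lagr n k d z) = 
    ∏ i, ∏ c ∈ Finset.univ.erase (z.1 (z.2.1 i)), (X (w.1 (w.2.1 i)) - X c) := by
  rw [lagr, map_prod]
  refine Finset.prod_congr rfl fun i _ => ?_
  rw [map_prod]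
  refine Finset.prod_congr rfl fun c _ => ?_
  rw [map_sub, AlgHom.commutes, evA_apply, xHomZ_coe, rename_X]
  congr 1
  simp [evB]

theorem lagr_self (n k d : ℕ) (z : Pts n k d) : evA n k d z (lagr n k d z) ≠ 0 := by
  rw [lagr_eval]
  refine Finset.prod_ne_zero_iff.2 fun i _ => Finset.prod_ne_zero_iff.2 fun c hc => ?_
  rw [sub_ne_zero]
  exact fun h => (Finset.mem_erase.1 hc).1 (X_injective h).symm

theorem lagr_ne (n k d : ℕ) (z w : Pts n k d) (h : w ≠ z) : evA n k d w (lagr n k d z) = 0 := by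
  rw [lagr_eval]
  have : ∃ i, w.1 (w.2.1 i) ≠ z.1 (z.2.1 i) := by
    by_contra hh
    push Not at hh
    exact h (pts_inj n k d w z hh)
  obtain ⟨i, hi⟩ := this
  refine Finset.prod_eq_zero (Finset.mem_univ i) (Finset.prod_eq_zero (Finset.mem_erase.2 ⟨hi, Finset.mem_univ _⟩) ?_)
  exact sub_self _

theorem card_pts (n k d : ℕ) : Nat.card (Pts n k d) = k.choose d * coverCount d n d := by
  classical
  rw [Nat.card_prod, Nat.card_congr Set.powersetCard.ofFinEmbEquiv, Set.powersetCard.card, Nat.card_eq_fintype_card,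
    Fintype.card_fin]
  congr 1
  have := card_cover d n Finset.univ
  rw [Finset.card_univ, Fintype.card_fin] at this
  rw [← this]
  exact Nat.subtype_card _ (fun a => by simp [Function.Surjective])

theorem card_C (n k d : ℕ) (hd : 1 ≤ d) (hk : d ≤ k) : Finite ↥(Subtype.val ⁻¹' CsetZ3 n k d : Set ↥(invZ3 n k d)) ∧ 
    Nat.card ↥(Subtype.val ⁻¹' CsetZ3 n k d : Set ↥(invZ3 n k d)) ≤ k.choose d * coverCount d n d := by
  classical
  let W := (Fin d ↪o Fin k) × {a : Fin n → Fin d // GoodWord d n d (fun i => a i)}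
  have hW : Nat.card W = k.choose d * coverCount d n d := by
    rw [Nat.card_prod, Nat.card_congr Set.powersetCard.ofFinEmbEquiv, Set.powersetCard.card, Nat.card_eq_fintype_card,
      Fintype.card_fin]
    congr 1
    rw [← card_goodWord d n d le_rfl]
    exact Nat.subtype_card _ (fun a => by simp)
  let F : W → invZ3 n k d := fun w => (∏ i, xHomZ n k d (X i) ^ (w.2.1 i : ℕ)) * hDet n k d (lamOf w.1)
  have hsub : (Subtype.val ⁻¹' CsetZ3 n k d : Set ↥(invZ3 n k d)) ⊆ Set.range F := by
    rintro f ⟨a, ha, lam, h1, h2, hf⟩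
    obtain ⟨u, hu⟩ := exists_lamOf hk lam h1 h2
    have hg := (isSubstaircase_iff n d hd a).1 ha
    have hlt := ((goodWord_iff d n d a le_rfl).1 hg).1
    refine ⟨⟨u, fun i => ⟨a i, hlt i⟩, hg⟩, ?_⟩
    apply Subtype.ext
    rw [hf, MulMemClass.coe_mul, hDet_coe, SubmonoidClass.coe_finsetProd, hu]
    simp only [SubmonoidClass.coe_pow, xHomZ_coe, rename_X]
  have hfin : (Set.range F).Finite := Set.finite_range F
  refine ⟨(hfin.subset hsub).to_subtype, ?_⟩
  rw [← hW]
  refine (Nat.card_mono hfin hsub).trans ?_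
  exact Finite.card_range_le F

theorem lin_core {R Q ι P : Type*} [CommRing R] [IsDomain R] [AddCommGroup Q] [Module R Q] [Fintype ι] [Fintype P]
    (v : ι → Q) (hspan : Submodule.span R (Set.range v) = ⊤) (hcard : Fintype.card ι ≤ Fintype.card P)
    (E : P → Q →ₗ[R] R) (l : P → Q) (hl : ∀ p, E p (l p) ≠ 0) (hl' : ∀ p q, q ≠ p → E q (l p) = 0) :
    LinearIndependent R v ∧ Fintype.card ι = Fintype.card P := by
  classical
  let K := FractionRing R
  let F : Q →ₗ[R] (P → K) := LinearMap.pi fun p => (Algebra.linearMap R K).comp (E p)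
  have hF : ∀ q p, F q p = algebraMap R K (E p q) := fun _ _ => rfl
  have htop : (⊤ : Submodule K (P → K)) ≤ Submodule.span K (Set.range (F ∘ v)) := by
    have h1 : ∀ q, F q ∈ Submodule.span K (Set.range (F ∘ v)) := by
      intro q
      have hq : q ∈ Submodule.span R (Set.range v) := by rw [hspan]; trivial
      have h2 : F q ∈ Submodule.span R (F '' Set.range v) := Submodule.apply_mem_span_image_of_mem_span F hq
      rw [← Set.range_comp] at h2
      exact Submodule.span_le_restrictScalars R K _ h2
    have h3 : ∀ p, (Pi.single p 1 : P → K) ∈ Submodule.span K (Set.range (F ∘ v)) := by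
      intro p
      have h4 : (Pi.single p 1 : P → K) = (algebraMap R K (E p (l p)))⁻¹ • F (l p) := by
        ext q
        rw [Pi.smul_apply, hF]
        by_cases h : q = p
        · subst h
          rw [Pi.single_eq_same, smul_eq_mul, inv_mul_cancel₀]
          intro h0
          exact hl q ((FaithfulSMul.algebraMap_eq_zero_iff R K).1 h0)
        · rw [Pi.single_eq_of_ne h, hl' p q h, map_zero, smul_zero]
      rw [h4]
      exact Submodule.smul_mem _ _ (h1 _)
    intro g _
    rw [pi_eq_sum_univ' g]
    refine Submodule.sum_mem _ fun p _ => Submodule.smul_mem _ _ ?_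
    convert h3 p using 1
  have hfr : Module.finrank K (P → K) = Fintype.card P := Module.finrank_fintype_fun_eq_card K
  have hli := linearIndependent_of_top_le_span_of_card_le_finrank htop (by rw [hfr]; exact hcard)
  refine ⟨?_, le_antisymm hcard ?_⟩
  · exact (hli.restrict_scalars' R).of_comp F
  · have h5 := finrank_range_le_card (R := K) (F ∘ v)
    rw [Set.finrank, top_le_iff.1 htop, finrank_top, hfr] at h5
    exact h5

/-- The set `C_{n,k,d}` descends to a `ℤ[t_1,…,t_k]`-module basis of
`ℤ[x,y,t]^{S_d}/I_{n,k,d}`; in particular this quotient is a free `ℤ[t_1,…,t_k]`-module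
of rank `(k!/(k−d)!)·Stir(n,d)`. -/
theorem CsetZ3_descends_to_basis (n k d : ℕ) (hd : 1 ≤ d) (hk : d ≤ k) (hn : k ≤ n) :
    LinearIndependent (MvPolynomial (Fin k) ℤ)
      (fun q : ↥(Subtype.val ⁻¹' CsetZ3 n k d : Set ↥(invZ3 n k d)) =>
        Ideal.Quotient.mk (Ideal.span (Subtype.val ⁻¹' Jtgens3Z n k d : Set ↥(invZ3 n k d)))
          (q : ↥(invZ3 n k d))) ∧
    Submodule.span (MvPolynomial (Fin k) ℤ)
      (⇑(Ideal.Quotient.mk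
          (Ideal.span (Subtype.val ⁻¹' Jtgens3Z n k d : Set ↥(invZ3 n k d)))) ''
        (Subtype.val ⁻¹' CsetZ3 n k d)) = ⊤ ∧
    Module.Free (MvPolynomial (Fin k) ℤ)
      (↥(invZ3 n k d) ⧸ Ideal.span (Subtype.val ⁻¹' Jtgens3Z n k d : Set ↥(invZ3 n k d))) ∧
    Module.rank (MvPolynomial (Fin k) ℤ)
        (↥(invZ3 n k d) ⧸
          Ideal.span (Subtype.val ⁻¹' Jtgens3Z n k d : Set ↥(invZ3 n k d))) =
      ((Nat.factorial k / Nat.factorial (k - d) * stirling2 n d : ℕ) : Cardinal) := by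
  classical
  have hcardC := card_C n k d hd hk
  obtain ⟨hfin, hle⟩ := hcardC
  have : Fintype ↥(Subtype.val ⁻¹' CsetZ3 n k d : Set ↥(invZ3 n k d)) := Fintype.ofFinite _
  let π := Ideal.Quotient.mkₐ (MvPolynomial (Fin k) ℤ)
    (Ideal.span (Subtype.val ⁻¹' Jtgens3Z n k d : Set ↥(invZ3 n k d)))
  have hsurj : Function.Surjective π := Ideal.Quotient.mk_surjective
  have hker : ∀ f : invZ3 n k d, f.1 ∈ Jtgens3Z n k d → π f = 0 := 
    fun f hf => Ideal.Quotient.eq_zero_iff_mem.2 (Ideal.subset_span hf)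
  have hspan := C_span n k d hd hk hn (Q := (↥(invZ3 n k d) ⧸ Ideal.span (Subtype.val ⁻¹' Jtgens3Z n k d : Set ↥(invZ3 n k d)))) π hker hsurj
  have hkill : ∀ z : Pts n k d, ∀ a ∈ Ideal.span (Subtype.val ⁻¹' Jtgens3Z n k d : Set ↥(invZ3 n k d)),
      evA n k d z a = 0 := by
    intro z a ha
    have h1 : Ideal.span (Subtype.val ⁻¹' Jtgens3Z n k d : Set ↥(invZ3 n k d)) ≤
        RingHom.ker (evA n k d z).toRingHom := by
      rw [Ideal.span_le]
      intro f hf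
      exact ev_kill n k d z f.1 hf
    exact h1 ha
  let E : Pts n k d → (↥(invZ3 n k d) ⧸ Ideal.span (Subtype.val ⁻¹' Jtgens3Z n k d : Set ↥(invZ3 n k d))) 
      →ₗ[MvPolynomial (Fin k) ℤ] MvPolynomial (Fin k) ℤ := 
    fun z => (Ideal.Quotient.liftₐ _ (evA n k d z) (hkill z)).toLinearMap
  have hE : ∀ z f, E z (π f) = evA n k d z f := fun z f => rfl
  have hpts : Fintype.card (Pts n k d) = k.choose d * coverCount d n d := by
    rw [← card_pts, Nat.card_eq_fintype_card]
  have hspan' : Submodule.span (MvPolynomial (Fin k) ℤ) (Set.range 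
      (fun q : ↥(Subtype.val ⁻¹' CsetZ3 n k d : Set ↥(invZ3 n k d)) => π q.1)) = ⊤ := by
    rw [← hspan, Set.image_eq_range]
  have hcore := lin_core (fun q : ↥(Subtype.val ⁻¹' CsetZ3 n k d : Set ↥(invZ3 n k d)) => π q.1) hspan' 
    (by rw [hpts, ← Nat.card_eq_fintype_card]; exact hle) E (fun z => π (lagr n k d z)) 
    (fun z => by rw [hE]; exact lagr_self n k d z) 
    (fun z w h => by rw [hE]; exact lagr_ne n k d z w h)
  obtain ⟨hli, hcard⟩ := hcore
  let b := Module.Basis.mk hli hspan'.ge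
  refine ⟨hli, hspan, Module.Free.of_basis b, ?_⟩
  rw [rank_eq_card_basis b, hcard, hpts, coverCount_stirling, ← Nat.descFactorial_eq_div hk,
    Nat.descFactorial_eq_factorial_mul_choose]
  congr 1
  ring
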